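/- arXiv:2305.12942 — 11 statements merged into one kernel-verified Lean document; each statement's English description precedes it below -/
import Mathlib

section
/- Let R be a finite commutative ring with 1 ≠ 0. Then |Z(R)| ≥ ψ_g(Γ(R))² − ψ_g(Γ(R)) + 1, where |Z(R)| is the number of zero-divisors of R (including 0). -/
open Classical

/-- The set of zero-divisors of `R` (including `0`). -/
def zeroDivisorSet (R : Type*) [CommRing R] : Set R :=
  {x : R | ∃ y : R, y ≠ 0 ∧ x * y = 0}

/-- Vertices of the zero-divisor graph: the nonzero zero-divisors of `R`. -/
abbrev ZDV (R : Type*) [CommRing R] : Type _ :=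
  {x : R // x ≠ 0 ∧ ∃ y : R, y ≠ 0 ∧ x * y = 0}

/-- The zero-divisor graph `Γ(R)` of a commutative ring `R`: vertices are the nonzero
zero-divisors, and distinct vertices `x`, `y` are adjacent iff `x * y = 0`. -/
def zdGraph (R : Type*) [CommRing R] : SimpleGraph (ZDV R) where
  Adj a b := a ≠ b ∧ (a : R) * (b : R) = 0
  symm := by
    constructor
    intro a b h
    exact ⟨h.1.symm, by rw [mul_comm]; exact h.2⟩
  loopless := by
    constructor
    intro a h
    exact h.1 rfl

/-- `degIn G S v` is the number of neighbors of `v` lying in `S`. -/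
noncomputable def degIn {V : Type*} (G : SimpleGraph V) (S : Set V) (v : V) : ℕ :=
  Set.ncard {u : V | u ∈ S ∧ G.Adj v u}

/-- `S` is a dominating set: every vertex outside `S` has a neighbor in `S`. -/
def IsDominatingSet {V : Type*} (G : SimpleGraph V) (S : Set V) : Prop :=
  ∀ v ∉ S, ∃ u ∈ S, G.Adj v u

/-- `S` is a defensive alliance: `S` is nonempty and every `v ∈ S` satisfies
`deg_S(v) + 1 ≥ deg_{Sᶜ}(v)`. -/
def IsDefensiveAlliance {V : Type*} (G : SimpleGraph V) (S : Set V) : Prop :=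
  S.Nonempty ∧ ∀ v ∈ S, degIn G Sᶜ v ≤ degIn G S v + 1

/-- A global defensive alliance is a defensive alliance that is also a dominating set. -/
def IsGlobalDefensiveAlliance {V : Type*} (G : SimpleGraph V) (S : Set V) : Prop :=
  IsDefensiveAlliance G S ∧ IsDominatingSet G S

/-- `P` is a partition of the vertex set of `G` into global defensive alliances. -/
def IsGDAPartition {V : Type*} (G : SimpleGraph V) (P : Finset (Set V)) : Prop :=
  (∀ S ∈ P, IsGlobalDefensiveAlliance G S) ∧
  (⋃₀ (P : Set (Set V)) = Set.univ) ∧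
  ((P : Set (Set V)).Pairwise Disjoint)

/-- The global defensive alliance partition number `ψ_g(G)`: the maximum number of parts in
a partition of the vertex set into global defensive alliances. -/
noncomputable def psiG {V : Type*} (G : SimpleGraph V) : ℕ :=
  sSup {n : ℕ | ∃ P : Finset (Set V), IsGDAPartition G P ∧ P.card = n}

/-- `G` is partitionable into global defensive alliances iff `ψ_g(G) ≥ 2`. -/
def PartitionableGDA {V : Type*} (G : SimpleGraph V) : Prop :=
  2 ≤ psiG G

/-- The global defensive alliance number `γ_a(G)`: the minimum cardinality of a global
defensive alliance. -/
noncomputable def gammaA {V : Type*} (G : SimpleGraph V) : ℕ :=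
  sInf {n : ℕ | ∃ S : Set V, IsGlobalDefensiveAlliance G S ∧ S.ncard = n}

theorem aux_part {V : Type*} [Finite V] (G : SimpleGraph V) (P : Finset (Set V))
    (hP : IsGDAPartition G P) (S : Set V) (hS : S ∈ P) : P.card - 1 ≤ S.ncard := by
  obtain ⟨h1, h2, h3⟩ := hP
  obtain ⟨⟨⟨v, hv⟩, hdef⟩, -⟩ := h1 S hS
  have hf : ∀ T : Set V, ∃ u : V, T ∈ P.erase S → u ∈ T ∧ u ∉ S ∧ G.Adj v u := by
    intro T
    by_cases hT : T ∈ P.erase S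
    · obtain ⟨hne, hTP⟩ := Finset.mem_erase.1 hT
      have hd := h3 hTP hS hne
      have hvT : v ∉ T := fun h => Set.disjoint_left.1 hd h hv
      obtain ⟨u, hu, hadj⟩ := (h1 T hTP).2 v hvT
      exact ⟨u, fun _ => ⟨hu, fun h => Set.disjoint_left.1 hd hu h, hadj⟩⟩
    · exact ⟨v, fun h => absurd h hT⟩
  choose f hf using hf
  have hc : (P.erase S).card ≤ degIn G Sᶜ v := by
    rw [← Set.ncard_coe_finset]
    refine Set.ncard_le_ncard_of_injOn f (fun T hT => ⟨(hf T hT).2.1, (hf T hT).2.2⟩) ?_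
      (Set.toFinite _)
    intro T hT T' hT' he
    by_contra hne
    have hd := h3 (Finset.mem_of_mem_erase hT) (Finset.mem_of_mem_erase hT') hne
    exact Set.disjoint_left.1 hd (hf T hT).1 (he ▸ (hf T' hT').1)
  have hlt : degIn G S v < S.ncard := by
    refine Set.ncard_lt_ncard ⟨fun u hu => hu.1, fun h => ?_⟩ (Set.toFinite _)
    exact G.irrefl (h hv).2
  have := hdef v hv
  rw [Finset.card_erase_of_mem hS] at hc
  omega

theorem aux_total {V : Type*} [Finite V] (G : SimpleGraph V) (P : Finset (Set V))
    (hP : IsGDAPartition G P) : P.card * (P.card - 1) ≤ Nat.card V := by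
  have := Fintype.ofFinite V
  have h : P.card * (P.card - 1) ≤ ∑ S ∈ P, S.toFinset.card := by
    rw [← smul_eq_mul]
    refine Finset.card_nsmul_le_sum _ _ _ fun S hS => ?_
    rw [← Set.ncard_eq_toFinset_card']
    exact aux_part G P hP S hS
  rw [← Finset.card_biUnion] at h
  · rw [Nat.card_eq_fintype_card]
    exact h.trans (Finset.card_le_univ _)
  · intro S hS T hT hne
    exact Set.disjoint_toFinset.2 (hP.2.2 hS hT hne)

theorem aux_psi {V : Type*} [Finite V] (G : SimpleGraph V) :
    psiG G * (psiG G - 1) ≤ Nat.card V := by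
  by_cases hne : {n : ℕ | ∃ P : Finset (Set V), IsGDAPartition G P ∧ P.card = n}.Nonempty
  · have hb : BddAbove {n : ℕ | ∃ P : Finset (Set V), IsGDAPartition G P ∧ P.card = n} := by
      have := Fintype.ofFinite (Set V)
      refine ⟨Fintype.card (Set V), ?_⟩
      rintro n ⟨P, -, rfl⟩
      exact Finset.card_le_univ _
    obtain ⟨P, hP, hc⟩ := Nat.sSup_mem hne hb
    have := aux_total G P hP
    rw [hc] at this
    exact this
  · rw [Set.not_nonempty_iff_eq_empty] at hne
    simp [psiG, hne]

/-- For a finite commutative ring `R` with `1 ≠ 0`,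
`|Z(R)| ≥ ψ_g(Γ(R))² − ψ_g(Γ(R)) + 1`. -/
theorem stmt0 (R : Type*) [CommRing R] [Finite R] [Nontrivial R] :
    (zeroDivisorSet R).ncard ≥ psiG (zdGraph R) ^ 2 - psiG (zdGraph R) + 1 := by
  have h := aux_psi (zdGraph R)
  have hlt : Nat.card (ZDV R) < (zeroDivisorSet R).ncard := by
    change Nat.card ({x : R | x ≠ 0 ∧ ∃ y : R, y ≠ 0 ∧ x * y = 0} : Set R) < _
    rw [Nat.card_coe_set_eq]
    refine Set.ncard_lt_ncard ⟨fun u hu => hu.2, fun h => ?_⟩ (Set.toFinite _)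
    exact (h (show (0 : R) ∈ zeroDivisorSet R from ⟨1, one_ne_zero, zero_mul _⟩)).1 rfl
  rw [Nat.mul_sub, mul_one, ← sq] at h
  omega
end

section
/- Let (R, M) be a finite local commutative ring whose maximal ideal M is nilpotent of index 2 (i.e., M ≠ 0 and M² = 0). Then: (1) if |M| is odd, Γ(R) is partitionable into global defensive alliances and ψ_g(Γ(R)) = 2; (2) if |M| is even, Γ(R) is not partitionable into global defensive alliances. -/
open Classical

lemma gda_iff {V : Type*} [Finite V] (G : SimpleGraph V) (hG : ∀ a b, a ≠ b → G.Adj a b)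
    (S : Set V) :
    IsGlobalDefensiveAlliance G S ↔ S.Nonempty ∧ Nat.card V ≤ 2 * S.ncard := by
  have hc := Set.ncard_add_ncard_compl S
  have key : ∀ v ∈ S, (degIn G Sᶜ v ≤ degIn G S v + 1 ↔ Nat.card V ≤ 2 * S.ncard) := by
    intro v hv
    have e1 : {u : V | u ∈ Sᶜ ∧ G.Adj v u} = Sᶜ := by
      ext u
      simp only [Set.mem_ofPred_eq, and_iff_left_iff_imp]
      intro hu
      exact hG _ _ (fun h => hu (h ▸ hv))
    have e2 : {u : V | u ∈ S ∧ G.Adj v u} = S \ {v} := by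
      ext u
      simp only [Set.mem_ofPred_eq, Set.mem_sdiff, Set.mem_singleton_iff]
      exact and_congr_right fun _ => ⟨fun h => h.ne', fun h => hG _ _ (Ne.symm h)⟩
    have e3 := Set.ncard_sdiff_singleton_add_one hv
    unfold degIn
    rw [e1, e2]
    omega
  constructor
  · rintro ⟨⟨⟨v, hv⟩, h⟩, -⟩
    exact ⟨⟨v, hv⟩, (key v hv).1 (h v hv)⟩
  · rintro ⟨⟨v, hv⟩, h⟩
    exact ⟨⟨⟨v, hv⟩, fun w hw => (key w hw).2 h⟩,
      fun w hw => ⟨v, hv, hG _ _ (fun h => hw (h ▸ hv))⟩⟩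

lemma part_sum {V : Type*} [Finite V] (G : SimpleGraph V) (P : Finset (Set V))
    (hP : IsGDAPartition G P) : ∑ S ∈ P, S.ncard = Nat.card V := by
  have := Fintype.ofFinite V
  have h := Finset.card_biUnion (s := P) (t := fun S : Set V => S.toFinset)
    (fun A hA B hB hne => by
      simpa using hP.2.2 hA hB hne)
  have hu : P.biUnion (fun S : Set V => S.toFinset) = Finset.univ := by
    ext x
    have : x ∈ ⋃₀ (P : Set (Set V)) := by rw [hP.2.1]; trivial
    simpa using this
  rw [hu, Finset.card_univ] at h
  rw [Nat.card_eq_fintype_card, h]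
  exact Finset.sum_congr rfl fun S _ => Set.ncard_eq_toFinset_card' S

lemma zdv_card (R : Type*) [CommRing R] [IsLocalRing R] [Finite R]
    (h2 : IsLocalRing.maximalIdeal R ^ 2 = ⊥) :
    Nat.card (ZDV R) + 1 = Nat.card (IsLocalRing.maximalIdeal R) := by
  have e : {x : R | x ≠ 0 ∧ ∃ y : R, y ≠ 0 ∧ x * y = 0}
      = (IsLocalRing.maximalIdeal R : Set R) \ {0} := by
    ext x
    simp only [Set.mem_ofPred_eq, Set.mem_sdiff, Set.mem_singleton_iff, SetLike.mem_coe,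
      IsLocalRing.mem_maximalIdeal, mem_nonunits_iff]
    constructor
    · rintro ⟨hx, y, hy, hxy⟩
      exact ⟨fun hu => hy (hu.mul_right_eq_zero.1 hxy), hx⟩
    · rintro ⟨hu, hx⟩
      refine ⟨hx, x, hx, ?_⟩
      have : x * x ∈ IsLocalRing.maximalIdeal R ^ 2 := by
        rw [pow_two]
        exact Ideal.mul_mem_mul hu hu
      simpa [h2] using this
  have h0 : (0 : R) ∈ (IsLocalRing.maximalIdeal R : Set R) := by simp
  have := Set.ncard_sdiff_singleton_add_one h0
  rw [← e] at this
  exact this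

lemma zd_adj (R : Type*) [CommRing R] [IsLocalRing R]
    (h2 : IsLocalRing.maximalIdeal R ^ 2 = ⊥) (a b : ZDV R) (hab : a ≠ b) :
    (zdGraph R).Adj a b := by
  have hm : ∀ c : ZDV R, (c : R) ∈ IsLocalRing.maximalIdeal R := by
    rintro ⟨x, hx, y, hy, hxy⟩
    rw [IsLocalRing.mem_maximalIdeal, mem_nonunits_iff]
    exact fun hu => hy (hu.mul_right_eq_zero.1 hxy)
  refine ⟨hab, ?_⟩
  have : (a : R) * b ∈ IsLocalRing.maximalIdeal R ^ 2 := by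
    rw [pow_two]
    exact Ideal.mul_mem_mul (hm a) (hm b)
  simpa [h2] using this

/-- For a finite local commutative ring whose maximal ideal `M` is nilpotent
of index 2: if `|M|` is odd then `Γ(R)` is partitionable into global defensive alliances
with `ψ_g(Γ(R)) = 2`; if `|M|` is even then it is not partitionable. -/
theorem stmt1 (R : Type*) [CommRing R] [IsLocalRing R] [Finite R]
    (h1 : IsLocalRing.maximalIdeal R ≠ ⊥)
    (h2 : IsLocalRing.maximalIdeal R ^ 2 = ⊥) :
    (Odd (Nat.card (IsLocalRing.maximalIdeal R)) →
      PartitionableGDA (zdGraph R) ∧ psiG (zdGraph R) = 2) ∧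
    (Even (Nat.card (IsLocalRing.maximalIdeal R)) →
      ¬ PartitionableGDA (zdGraph R)) := by
  have hG := zd_adj R h2
  have hcard := zdv_card R h2
  have hpos : 0 < Nat.card (ZDV R) := by
    obtain ⟨x, hx, hx0⟩ := Submodule.exists_mem_ne_zero_of_ne_bot h1
    have : Nontrivial (IsLocalRing.maximalIdeal R) :=
      ⟨⟨x, hx⟩, 0, fun h => hx0 (congrArg Subtype.val h)⟩
    have := Finite.one_lt_card (α := IsLocalRing.maximalIdeal R)
    omega
  have hsum : ∀ (P : Finset (Set (ZDV R))) (k : ℕ), IsGDAPartition (zdGraph R) P →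
      (∀ m : ℕ, Nat.card (ZDV R) ≤ 2 * m → k ≤ m) → P.card * k ≤ Nat.card (ZDV R) := by
    intro P k hP hk
    rw [← part_sum _ P hP, ← smul_eq_mul]
    exact Finset.card_nsmul_le_sum _ _ _ fun S hS => hk _ ((gda_iff _ hG S).1 (hP.1 S hS)).2
  constructor
  · intro ho
    obtain ⟨k, hk⟩ := ho
    have hn : Nat.card (ZDV R) = 2 * k := by omega
    have hub : ∀ n ∈ {n : ℕ | ∃ P : Finset (Set (ZDV R)),
        IsGDAPartition (zdGraph R) P ∧ P.card = n}, n ≤ 2 := by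
      rintro n ⟨P, hP, rfl⟩
      have := hsum P k hP (fun m hm => by omega)
      rw [hn] at this
      exact Nat.le_of_mul_le_mul_right this (by omega)
    have hmem : ∃ P : Finset (Set (ZDV R)),
        IsGDAPartition (zdGraph R) P ∧ P.card = 2 := by
      obtain ⟨S, -, hS⟩ := Set.exists_subset_card_eq (s := (Set.univ : Set (ZDV R))) (n := k)
        (by rw [Set.ncard_univ]; omega)
      have hc := Set.ncard_add_ncard_compl S
      have hS1 : S.Nonempty := Set.nonempty_of_ncard_ne_zero (by omega)
      have hS2 : Sᶜ.Nonempty := Set.nonempty_of_ncard_ne_zero (by omega)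
      have hne : S ≠ Sᶜ := by
        intro h
        obtain ⟨x, hx⟩ := hS1
        have hx' := hx
        rw [h] at hx'
        exact hx' hx
      refine ⟨{S, Sᶜ}, ⟨?_, ?_, ?_⟩, Finset.card_pair hne⟩
      · intro T hT
        rw [gda_iff _ hG]
        rcases Finset.mem_insert.1 hT with rfl | hT
        · exact ⟨hS1, by omega⟩
        · rw [Finset.mem_singleton.1 hT]
          exact ⟨hS2, by omega⟩
      · simp
      · intro A hA B hB hAB
        simp only [Finset.coe_insert, Finset.coe_singleton, Set.mem_insert_iff,
          Set.mem_singleton_iff] at hA hB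
        rcases hA with rfl | rfl <;> rcases hB with rfl | rfl
        · exact absurd rfl hAB
        · exact disjoint_compl_right
        · exact disjoint_compl_left
        · exact absurd rfl hAB
    have : psiG (zdGraph R) = 2 :=
      le_antisymm (csSup_le' hub) (le_csSup ⟨2, hub⟩ hmem)
    exact ⟨this.ge, this⟩
  · rintro ⟨k, hk⟩ hpart
    have hle : psiG (zdGraph R) ≤ 1 := by
      refine csSup_le' ?_
      rintro n ⟨P, hP, rfl⟩
      have := hsum P k hP (fun m hm => by omega)
      by_contra hlt
      have h3 : 2 * k ≤ P.card * k := Nat.mul_le_mul_right k (by omega)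
      omega
    unfold PartitionableGDA at hpart
    omega
end

section
/- Let F be a finite field. Then Γ(ℤ₂ × F) is partitionable into global defensive alliances if and only if F is isomorphic to ℤ₂ (equivalently, |F| = 2). -/
open Classical

lemma z2cases (a : ZMod 2) : a = 0 ∨ a = 1 := by
  revert a; decide

lemma vclass {F : Type*} [Field F] (v : ZDV (ZMod 2 × F)) :
    v.1 = (1, 0) ∨ ∃ u : F, u ≠ 0 ∧ v.1 = (0, u) := by
  obtain ⟨⟨a, b⟩, hne, ⟨y1, y2⟩, hy, hxy⟩ := v
  have h1 : a * y1 = 0 := congrArg Prod.fst hxy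
  have h2 : b * y2 = 0 := congrArg Prod.snd hxy
  rcases z2cases a with ha | ha
  · right
    exact ⟨b, fun h => hne (Prod.ext ha h), Prod.ext ha rfl⟩
  · left
    refine Prod.ext ha ?_
    rw [ha, one_mul] at h1
    rcases mul_eq_zero.1 h2 with h2 | h2
    · exact h2
    · exact absurd (Prod.ext h1 h2) hy

/-- The centre of the star. -/
def cV (F : Type*) [Field F] : ZDV (ZMod 2 × F) :=
  ⟨(1, 0), by simp, (0, 1), by simp, by simp⟩

/-- The leaves of the star. -/
def lV {F : Type*} [Field F] (u : F) (hu : u ≠ 0) : ZDV (ZMod 2 × F) :=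
  ⟨(0, u), by simp [hu], (1, 0), by simp, by simp⟩

lemma cl_ne {F : Type*} [Field F] (u : F) (hu : u ≠ 0) : cV F ≠ lV u hu := by
  intro h
  have := congrArg (fun v => v.1.1) h
  simp [cV, lV] at this

lemma adj_cl {F : Type*} [Field F] (u : F) (hu : u ≠ 0) :
    (zdGraph (ZMod 2 × F)).Adj (cV F) (lV u hu) :=
  ⟨cl_ne u hu, by simp [cV, lV]⟩

lemma vclass' {F : Type*} [Field F] (v : ZDV (ZMod 2 × F)) :
    v = cV F ∨ ∃ (u : F) (hu : u ≠ 0), v = lV u hu := by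
  rcases vclass v with h | ⟨u, hu, h⟩
  · exact Or.inl (Subtype.ext h)
  · exact Or.inr ⟨u, hu, Subtype.ext h⟩

lemma adj_leaf {F : Type*} [Field F] (u : F) (hu : u ≠ 0) (v : ZDV (ZMod 2 × F))
    (h : (zdGraph (ZMod 2 × F)).Adj (lV u hu) v) : v = cV F := by
  rcases vclass' v with h' | ⟨w, hw, rfl⟩
  · exact h'
  · have := h.2
    simp [lV, hu, hw] at this

lemma bdd {V : Type*} [Finite V] (G : SimpleGraph V) :
    BddAbove {n : ℕ | ∃ P : Finset (Set V), IsGDAPartition G P ∧ P.card = n} := by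
  haveI := Fintype.ofFinite (Set V)
  refine ⟨Fintype.card (Set V), ?_⟩
  rintro n ⟨P, -, rfl⟩
  exact Finset.card_le_univ P

lemma all_one {F : Type*} [Field F] [Finite F]
    (h : PartitionableGDA (zdGraph (ZMod 2 × F))) (u : F) (hu : u ≠ 0) : u = 1 := by
  unfold PartitionableGDA psiG at h
  have hne : {n : ℕ | ∃ P : Finset (Set (ZDV (ZMod 2 × F))),
      IsGDAPartition (zdGraph (ZMod 2 × F)) P ∧ P.card = n}.Nonempty := by
    by_contra hcon
    rw [Set.not_nonempty_iff_eq_empty] at hcon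
    rw [hcon] at h
    simp at h
  obtain ⟨P, ⟨hP, hU, hD⟩, hc⟩ := Nat.sSup_mem hne (bdd _)
  rw [← hc] at h
  have hcm : cV F ∈ ⋃₀ (P : Set (Set (ZDV (ZMod 2 × F)))) := by rw [hU]; trivial
  obtain ⟨S, hS, hcS⟩ := hcm
  obtain ⟨T, hT, hTS⟩ := Finset.exists_mem_ne (by omega : 1 < P.card) S
  have hdis : Disjoint T S := hD hT hS hTS
  have hcT : cV F ∉ T := fun hh => Set.disjoint_left.1 hdis hh hcS
  have hleaf : ∀ (w : F) (hw : w ≠ 0), lV w hw ∉ S := by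
    intro w hw hwS
    obtain ⟨x, hx, hadj⟩ := (hP T hT).2 (lV w hw) (fun hh => Set.disjoint_left.1 hdis hh hwS)
    rw [adj_leaf w hw x hadj] at hx
    exact hcT hx
  have hdeg := (hP S hS).1.2 (cV F) hcS
  have h0 : degIn (zdGraph (ZMod 2 × F)) S (cV F) = 0 := by
    unfold degIn
    rw [Set.ncard_eq_zero]
    ext x
    simp only [Set.mem_ofPred_eq, Set.mem_empty_iff_false, iff_false, not_and]
    intro hx hadj
    rcases vclass' x with rfl | ⟨w, hw, rfl⟩
    · exact hadj.1 rfl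
    · exact hleaf w hw hx
  rw [h0, zero_add] at hdeg
  unfold degIn at hdeg
  rw [Set.ncard_le_one_iff] at hdeg
  have := hdeg (a := lV u hu) (b := lV 1 one_ne_zero)
    ⟨hleaf _ _, adj_cl _ _⟩ ⟨hleaf _ _, adj_cl _ _⟩
  have := congrArg (fun v => v.1.2) this
  simpa [lV] using this

lemma gda_pair {V : Type*} (G : SimpleGraph V) (a b : V) (hab : G.Adj a b)
    (hall : ∀ v, v = a ∨ v = b) : IsGlobalDefensiveAlliance G {a} := by
  refine ⟨⟨Set.singleton_nonempty a, ?_⟩, ?_⟩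
  · rintro v rfl
    have hsub : {u : V | u ∈ ({v} : Set V)ᶜ ∧ G.Adj v u} ⊆ {b} := by
      rintro x ⟨hx, -⟩
      rcases hall x with h | h
      · exact absurd h hx
      · exact h
    have := Set.ncard_le_ncard hsub (Set.finite_singleton b)
    rw [Set.ncard_singleton] at this
    unfold degIn
    omega
  · intro v hv
    rcases hall v with h | h
    · exact absurd h hv
    · subst h
      exact ⟨a, rfl, hab.symm⟩

lemma part_of_pair {V : Type*} [Finite V] (G : SimpleGraph V) (a b : V) (hab : G.Adj a b)
    (hall : ∀ v, v = a ∨ v = b) : PartitionableGDA G := by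
  have hne : ({a} : Set V) ≠ {b} := fun h => hab.ne (Set.singleton_injective h)
  refine le_csSup (bdd G) ⟨{{a}, {b}}, ⟨?_, ?_, ?_⟩, Finset.card_pair hne⟩
  · intro S hS
    rw [Finset.mem_insert, Finset.mem_singleton] at hS
    rcases hS with rfl | rfl
    · exact gda_pair G a b hab hall
    · exact gda_pair G b a hab.symm (fun v => (hall v).symm)
  · ext v
    have := (hall v).symm
    simpa using this
  · rw [Finset.coe_pair, Set.pairwise_pair]
    intro _
    have := hab.ne
    simp [this, this.symm]

/-- For a finite field `F`, `Γ(ℤ₂ × F)` is partitionable into global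
defensive alliances iff `F ≅ ℤ₂`. -/
theorem stmt4 (F : Type*) [Field F] [Finite F] :
    PartitionableGDA (zdGraph (ZMod 2 × F)) ↔ Nonempty (F ≃+* ZMod 2) := by
  constructor
  · intro h
    have h1 := all_one h
    haveI := Fintype.ofFinite F
    have hcard : Fintype.card F = 2 := by
      rw [← Finset.card_univ]
      have : (Finset.univ : Finset F) = {0, 1} := by
        ext x
        have := h1 x
        simp only [Finset.mem_univ, Finset.mem_insert, Finset.mem_singleton, true_iff]
        tauto
      rw [this, Finset.card_pair zero_ne_one]
    exact ⟨(ZMod.ringEquivOfPrime F Nat.prime_two hcard).symm⟩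
  · rintro ⟨e⟩
    refine part_of_pair _ (cV F) (lV 1 one_ne_zero) (adj_cl _ _) ?_
    intro v
    rcases vclass' v with h | ⟨u, hu, rfl⟩
    · exact Or.inl h
    · right
      have : u = 1 := by
        rcases z2cases (e u) with h | h
        · exact absurd ((map_eq_zero_iff e e.injective).1 h) hu
        · exact (map_eq_one_iff e e.injective).1 h
      subst this
      rfl
end

section
/- Let p be a prime number. (1) If p = 2, then Γ(ℤ₂ × ℤ_p) is partitionable into global defensive alliances and ψ_g(Γ(ℤ₂ × ℤ_p)) = 2. (2) If p ≠ 2, then Γ(ℤ₂ × ℤ_p) is not partitionable into global defensive alliances. -/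
open Classical

def IsStarAt {V : Type*} (G : SimpleGraph V) (c : V) : Prop :=
  ∀ u v, G.Adj u v ↔ u ≠ v ∧ (u = c ∨ v = c)

lemma star_part_eq {V : Type*} {G : SimpleGraph V} {c : V} (h : IsStarAt G c) {T : Set V}
    (hT : IsGlobalDefensiveAlliance G T) (hc : c ∉ T) : T = {c}ᶜ := by
  ext v
  constructor
  · rintro hv rfl
    exact hc hv
  · intro hv
    by_contra hvT
    obtain ⟨u, hu, ha⟩ := hT.2 v hvT
    rcases ((h v u).1 ha).2 with h1 | h1
    · exact hv h1
    · exact hc (h1 ▸ hu)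

lemma card_le_two_of_star {V : Type*} {G : SimpleGraph V} {c : V} (h : IsStarAt G c)
    {P : Finset (Set V)} (hP : IsGDAPartition G P) : P.card ≤ 2 := by
  by_contra hcon
  push Not at hcon
  obtain ⟨A, hA, B, hB, C, hC, hAB, hAC, hBC⟩ := Finset.two_lt_card.1 hcon
  have key : ∀ X ∈ P, ∀ Y ∈ P, X ≠ Y → ((c ∈ X ∧ c ∉ Y) ∨ (c ∉ X ∧ c ∈ Y)) := by
    intro X hX Y hY hne
    by_cases h1 : c ∈ X
    · left
      refine ⟨h1, fun h2 => ?_⟩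
      exact Set.disjoint_left.1 (hP.2.2 (by exact_mod_cast hX) (by exact_mod_cast hY) hne) h1 h2
    · right
      refine ⟨h1, ?_⟩
      by_contra h2
      exact hne ((star_part_eq h (hP.1 X hX) h1).trans (star_part_eq h (hP.1 Y hY) h2).symm)
  have h1 := key A hA B hB hAB
  have h2 := key A hA C hC hAC
  have h3 := key B hB C hC hBC
  tauto

lemma psiG_star_lt {V : Type*} [Finite V] {G : SimpleGraph V} {c a b : V} (h : IsStarAt G c)
    (ha : a ≠ c) (hb : b ≠ c) (hab : a ≠ b) : psiG G < 2 := by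
  have hle : psiG G ≤ 1 := by
    unfold psiG
    refine csSup_le' ?_
    rintro n ⟨P, hP, rfl⟩
    by_contra hcon
    push Not at hcon
    obtain ⟨A, hA, B, hB, hAB⟩ := Finset.one_lt_card.1 hcon
    have hdis : Disjoint A B := hP.2.2 (by exact_mod_cast hA) (by exact_mod_cast hB) hAB
    have main : ∀ X ∈ P, ∀ Y ∈ P, Disjoint X Y → c ∉ X → False := by
      intro X hX Y hY hd hcX
      have hXe := star_part_eq h (hP.1 X hX) hcX
      have hcY : ∀ y ∈ Y, y = c := by
        intro y hy
        by_contra hyc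
        have : y ∈ X := by rw [hXe]; exact hyc
        exact Set.disjoint_left.1 hd this hy
      obtain ⟨y, hy⟩ := (hP.1 Y hY).1.1
      have hyc := hcY y hy
      subst hyc
      have hdeg := (hP.1 Y hY).1.2 y hy
      have h0 : degIn G Y y = 0 := by
        unfold degIn
        have : {u : V | u ∈ Y ∧ G.Adj y u} = ∅ := by
          ext u
          simp only [Set.mem_setOf_eq, Set.mem_empty_iff_false, iff_false]
          rintro ⟨h1, h2⟩
          exact h2.ne (hcY u h1).symm
        rw [this, Set.ncard_empty]
      have h2 : 2 ≤ degIn G Yᶜ y := by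
        unfold degIn
        rw [← Set.ncard_pair hab]
        refine Set.ncard_le_ncard ?_ (Set.toFinite _)
        rintro u (rfl | rfl)
        · exact ⟨fun h1 => ha (hcY _ h1), (h _ _).2 ⟨ha.symm, Or.inl rfl⟩⟩
        · exact ⟨fun h1 => hb (hcY _ h1), (h _ _).2 ⟨hb.symm, Or.inl rfl⟩⟩
      omega
    by_cases hcA : c ∈ A
    · exact main B hB A hA hdis.symm (Set.disjoint_left.1 hdis hcA)
    · exact main A hA B hB hdis hcA
  omega

lemma singleton_gda {V : Type*} [Finite V] {G : SimpleGraph V} {c a : V} (h : IsStarAt G c)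
    (hca : a ≠ c) (hall : ∀ v, v = c ∨ v = a) (x : V) : IsGlobalDefensiveAlliance G {x} := by
  refine ⟨⟨⟨x, rfl⟩, ?_⟩, ?_⟩
  · rintro v rfl
    have : degIn G ({v} : Set V)ᶜ v ≤ 1 := by
      unfold degIn
      rw [Set.ncard_le_one (Set.toFinite _)]
      rintro u ⟨hu, -⟩ w ⟨hw, -⟩
      simp only [Set.mem_compl_iff, Set.mem_singleton_iff] at hu hw
      have h1 := hall u
      have h2 := hall v
      have h3 := hall w
      grind
    omega
  · intro v hv
    refine ⟨x, rfl, (h _ _).2 ⟨hv, ?_⟩⟩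
    have hv' : v ≠ x := hv
    have h1 := hall v
    have h2 := hall x
    grind

lemma psiG_star_two {V : Type*} [Finite V] {G : SimpleGraph V} {c a : V} (h : IsStarAt G c)
    (hca : a ≠ c) (hall : ∀ v, v = c ∨ v = a) : psiG G = 2 := by
  have hub : ∀ n ∈ {n : ℕ | ∃ P : Finset (Set V), IsGDAPartition G P ∧ P.card = n}, n ≤ 2 := by
    rintro n ⟨P, hP, rfl⟩
    exact card_le_two_of_star h hP
  apply le_antisymm
  · exact csSup_le' hub
  · refine le_csSup ⟨2, hub⟩ ⟨{{c}, {a}}, ⟨?_, ?_, ?_⟩, ?_⟩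
    · intro S hS
      simp only [Finset.mem_insert, Finset.mem_singleton] at hS
      rcases hS with rfl | rfl
      · exact singleton_gda h hca hall c
      · exact singleton_gda h hca hall a
    · ext v
      simpa using (hall v).symm
    · intro X hX Y hY hne
      simp only [Finset.coe_insert, Finset.coe_singleton, Set.mem_insert_iff,
        Set.mem_singleton_iff] at hX hY
      rcases hX with rfl | rfl <;> rcases hY with rfl | rfl
      · exact absurd rfl hne
      · simpa using hca.symm
      · simpa using hca
      · exact absurd rfl hne
    · apply Finset.card_pair
      intro h1
      exact hca (Set.singleton_injective h1).symm

lemma zmod_two_cases (x : ZMod 2) : x = 0 ∨ x = 1 := by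
  revert x
  decide

section
variable (p : ℕ) [Fact p.Prime]

def ctr : ZDV (ZMod 2 × ZMod p) :=
  ⟨(1, 0), by simp, (0, 1), by simp, by simp⟩

def leaf (y : ZMod p) (hy : y ≠ 0) : ZDV (ZMod 2 × ZMod p) :=
  ⟨(0, y), by simpa using hy, (1, 0), by simp, by simp⟩

lemma zdv_cases (v : ZDV (ZMod 2 × ZMod p)) : v = ctr p ∨ ∃ y hy, v = leaf p y hy := by
  obtain ⟨⟨x, y⟩, h0, ⟨z, w⟩, h1, h2⟩ := v
  simp only [Prod.mk_mul_mk, Prod.mk_eq_zero, mul_eq_zero] at h2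
  simp only [ne_eq, Prod.mk_eq_zero] at h0 h1
  rcases zmod_two_cases x with rfl | rfl
  · right
    exact ⟨y, fun hy => h0 ⟨rfl, hy⟩, rfl⟩
  · left
    have hz : z = 0 := by simpa using h2.1
    have : y = 0 := by tauto
    subst this
    rfl

lemma leaf_ne_ctr (y : ZMod p) (hy : y ≠ 0) : leaf p y hy ≠ ctr p := by
  intro h
  have := congrArg (fun v => v.1.1) h
  simp [leaf, ctr] at this

lemma zd_star : IsStarAt (zdGraph (ZMod 2 × ZMod p)) (ctr p) := by
  intro u v
  change (u ≠ v ∧ (u : ZMod 2 × ZMod p) * v = 0) ↔ _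
  refine and_congr_right fun hne => ?_
  rcases zdv_cases p u with rfl | ⟨y, hy, rfl⟩ <;> rcases zdv_cases p v with rfl | ⟨z, hz, rfl⟩
  · exact absurd rfl hne
  · simp [ctr, leaf]
  · simp [ctr, leaf]
  · simp only [leaf_ne_ctr, or_self, iff_false]
    simp [leaf, hy, hz]

end

theorem stmt5 (p : ℕ) (hp : p.Prime) :
    (p = 2 → PartitionableGDA (zdGraph (ZMod 2 × ZMod p)) ∧
      psiG (zdGraph (ZMod 2 × ZMod p)) = 2) ∧
    (p ≠ 2 → ¬ PartitionableGDA (zdGraph (ZMod 2 × ZMod p))) := by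
  haveI : Fact p.Prime := ⟨hp⟩
  haveI : NeZero p := ⟨hp.ne_zero⟩
  constructor
  · rintro rfl
    have h : psiG (zdGraph (ZMod 2 × ZMod 2)) = 2 := by
      refine psiG_star_two (zd_star 2) (leaf_ne_ctr 2 1 one_ne_zero) fun v => ?_
      rcases zdv_cases 2 v with h | ⟨y, hy, rfl⟩
      · exact Or.inl h
      · right
        rcases zmod_two_cases y with rfl | rfl
        · exact absurd rfl hy
        · rfl
    exact ⟨h.ge, h⟩
  · intro h2
    have h11 : (1 : ZMod p) ≠ -1 := by
      haveI : Fact (2 < p) := ⟨lt_of_le_of_ne hp.two_le (Ne.symm h2)⟩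
      exact (ZMod.neg_one_ne_one).symm
    refine not_le.2 (psiG_star_lt (zd_star p) (leaf_ne_ctr p 1 one_ne_zero)
      (leaf_ne_ctr p (-1) (neg_ne_zero.2 one_ne_zero)) ?_)
    intro h
    exact h11 (congrArg (fun v => v.1.2) h)
end

section
/- Let R be a finite local commutative ring which is not a field. Then Γ(ℤ₂ × R) is partitionable into global defensive alliances if and only if R ≅ ℤ₄ or R ≅ ℤ₂[X]/(X²). Moreover, if Γ(ℤ₂ × R) is partitionable into global defensive alliances, then ψ_g(Γ(ℤ₂ × R)) = 2. -/
open Classical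

/-- Rings with exactly the elements `0, 1, s, 1 + s` where `s ≠ 0 = s²`. -/
def GoodRing (R : Type*) [CommRing R] : Prop :=
  ∃ s : R, s ≠ 0 ∧ s * s = 0 ∧ ∀ r : R, r = 0 ∨ r = 1 ∨ r = s ∨ r = 1 + s

theorem goodRing_of_equiv {R Q : Type*} [CommRing R] [CommRing Q] (e : R ≃+* Q)
    (h : GoodRing Q) : GoodRing R := by
  obtain ⟨s, h0, h1, h2⟩ := h
  refine ⟨e.symm s, ?_, ?_, ?_⟩
  · simpa using h0
  · rw [← map_mul, h1, map_zero]
  · intro r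
    rcases h2 (e r) with h | h | h | h
    · left; simpa using h
    · right; left; simpa using h
    · right; right; left; rw [← h]; simp
    · right; right; right; apply e.injective; simp [h]

theorem zmod2_cases : ∀ a : ZMod 2, a = 0 ∨ a = 1 := by decide

theorem goodRing_zmod4 : GoodRing (ZMod 4) := ⟨2, by decide, by decide, by decide⟩

theorem quot_cases (r : Polynomial (ZMod 2) ⧸
    Ideal.span {(Polynomial.X : Polynomial (ZMod 2)) ^ 2}) :
    r = 0 ∨ r = 1 ∨ r = Ideal.Quotient.mk _ Polynomial.X ∨
      r = 1 + Ideal.Quotient.mk _ Polynomial.X := by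
  obtain ⟨p, rfl⟩ := Ideal.Quotient.mk_surjective r
  have h1 := Polynomial.divX_mul_X_add p
  have h2 := Polynomial.divX_mul_X_add p.divX
  generalize p.divX.divX = q at h2
  generalize p.divX.coeff 0 = b at h2
  generalize p.coeff 0 = a at h1
  have h3 : p = Polynomial.X ^ 2 * q + (Polynomial.C b * Polynomial.X + Polynomial.C a) := by
    rw [← h1, ← h2]; ring
  have h4 : Ideal.Quotient.mk (Ideal.span {(Polynomial.X : Polynomial (ZMod 2)) ^ 2}) p =
      Ideal.Quotient.mk _ (Polynomial.C b * Polynomial.X + Polynomial.C a) := by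
    rw [Ideal.Quotient.eq, Ideal.mem_span_singleton]
    exact ⟨q, by rw [h3]; ring⟩
  rw [h4]
  have hb : b = 0 ∨ b = 1 := zmod2_cases b
  have ha : a = 0 ∨ a = 1 := zmod2_cases a
  rcases hb with rfl | rfl <;> rcases ha with rfl | rfl
  · left; simp
  · right; left; simp
  · right; right; left; simp
  · right; right; right; simp [add_comm]

theorem goodRing_quot : GoodRing (Polynomial (ZMod 2) ⧸
    Ideal.span {(Polynomial.X : Polynomial (ZMod 2)) ^ 2}) := by
  refine ⟨Ideal.Quotient.mk _ Polynomial.X, ?_, ?_, quot_cases⟩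
  · intro h
    rw [Ideal.Quotient.eq_zero_iff_mem, Ideal.mem_span_singleton, Polynomial.X_pow_dvd_iff] at h
    have := h 1 (by norm_num)
    simp at this
  · rw [← map_mul, Ideal.Quotient.eq_zero_iff_mem, Ideal.mem_span_singleton]
    exact ⟨1, by ring⟩

theorem equiv_of_goodRing {R : Type*} [CommRing R] [Nontrivial R] (h : GoodRing R) :
    Nonempty (R ≃+* ZMod 4) ∨
        Nonempty (R ≃+* (Polynomial (ZMod 2) ⧸
          Ideal.span {(Polynomial.X : Polynomial (ZMod 2)) ^ 2})) := by
  obtain ⟨s, h0, h1, h2⟩ := h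
  have hs1 : 1 + s ≠ 0 := by
    intro h
    apply h0
    have : s * (1 + s) = s := by rw [mul_add, h1]; ring
    rw [← this, h, mul_zero]
  by_cases h20 : (2 : R) = 0
  · right
    have hc : ringChar R ∣ 2 := ringChar.dvd (by exact_mod_cast h20)
    let f : Polynomial (ZMod 2) →+* R := Polynomial.eval₂RingHom (ZMod.castHom hc R) s
    have hX : f Polynomial.X = s := by simp [f]
    have hI : ∀ a ∈ Ideal.span {(Polynomial.X : Polynomial (ZMod 2)) ^ 2}, f a = 0 := by
      intro a ha
      rw [Ideal.mem_span_singleton] at ha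
      obtain ⟨c, rfl⟩ := ha
      rw [map_mul, map_pow, hX, sq, h1, zero_mul]
    let g := Ideal.Quotient.lift _ f hI
    have hgX : g (Ideal.Quotient.mk _ Polynomial.X) = s := by
      simp only [g, Ideal.Quotient.lift_mk, hX]
    have hb : Function.Bijective g := by
      constructor
      · rw [injective_iff_map_eq_zero]
        intro a ha
        rcases quot_cases a with h | h | h | h
        · exact h
        · rw [h, map_one] at ha; exact absurd ha one_ne_zero
        · rw [h, hgX] at ha; exact absurd ha h0
        · rw [h, map_add, map_one, hgX] at ha; exact absurd ha hs1
      · intro r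
        rcases h2 r with h | h | h | h
        · exact ⟨0, by rw [map_zero, h]⟩
        · exact ⟨1, by rw [map_one, h]⟩
        · exact ⟨_, hgX.trans h.symm⟩
        · exact ⟨1 + Ideal.Quotient.mk _ Polynomial.X, by rw [map_add, map_one, hgX, h]⟩
    exact ⟨(RingEquiv.ofBijective g hb).symm⟩
  · left
    have hs : (2 : R) = s := by
      rcases h2 2 with h | h | h | h
      · exact absurd h h20
      · exact absurd (by linear_combination h) (one_ne_zero (α := R))
      · exact h
      · have : s = 1 := by linear_combination -h
        rw [this] at h1
        simp at h1
    have h4 : ((4 : ℕ) : R) = 0 := by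
      push_cast
      rw [← hs] at h1
      linear_combination h1
    have hc : ringChar R ∣ 4 := ringChar.dvd h4
    let g := ZMod.castHom hc R
    have g2 : g 2 = s := by rw [map_ofNat]; exact hs
    have hcs : ∀ a : ZMod 4, a = 0 ∨ a = 1 ∨ a = 2 ∨ a = 1 + 2 := by decide
    have hb : Function.Bijective g := by
      constructor
      · rw [injective_iff_map_eq_zero]
        intro a ha
        rcases hcs a with h | h | h | h
        · exact h
        · rw [h, map_one] at ha; exact absurd ha one_ne_zero
        · rw [h, g2] at ha; exact absurd ha h0
        · rw [h, map_add, map_one, g2] at ha; exact absurd ha hs1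
      · intro r
        rcases h2 r with h | h | h | h
        · exact ⟨0, by rw [map_zero, h]⟩
        · exact ⟨1, by rw [map_one, h]⟩
        · exact ⟨_, g2.trans h.symm⟩
        · exact ⟨1 + 2, by rw [map_add, map_one, g2, h]⟩
    exact ⟨(RingEquiv.ofBijective g hb).symm⟩

theorem exists_socle (R : Type*) [CommRing R] [IsLocalRing R] [Finite R] :
    ∃ s : R, s ≠ 0 ∧ ∀ n ∈ IsLocalRing.maximalIdeal R, s * n = 0 := by
  have hn : ∃ k, IsLocalRing.maximalIdeal R ^ k = ⊥ := by
    have := IsArtinianRing.isNilpotent_jacobson_bot (R := R)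
    rw [IsLocalRing.jacobson_eq_maximalIdeal ⊥ bot_ne_top] at this
    exact this
  have hk := Nat.find_spec hn
  have hm := fun k => Nat.find_min (m := k) hn
  rcases hf : Nat.find hn with _ | k
  · rw [hf] at hk
    simp at hk
  · rw [hf] at hk
    have h := hm k (by omega)
    obtain ⟨s, hs, h0⟩ := (Submodule.ne_bot_iff _).1 h
    refine ⟨s, h0, fun n hn => ?_⟩
    have := Ideal.mul_mem_mul hs hn
    rw [← pow_succ, hk] at this
    simpa using this

/-- The vertex `(1, 0)`. -/
def vA (R : Type*) [CommRing R] [Nontrivial R] : ZDV (ZMod 2 × R) :=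
  ⟨(1, 0), by simp, (0, 1), by simp, by simp⟩

/-- The vertex `(0, r)`. -/
def vB {R : Type*} [CommRing R] (r : R) (h : r ≠ 0) : ZDV (ZMod 2 × R) :=
  ⟨(0, r), by simp [h], (1, 0), by simp, by simp⟩

theorem unit_mem {R : Type*} [CommRing R] [Nontrivial R] {T : Set (ZDV (ZMod 2 × R))}
    (hT : IsDominatingSet (zdGraph (ZMod 2 × R)) T) (ha : vA R ∉ T) (u : R) (hu : IsUnit u) :
    vB u hu.ne_zero ∈ T := by
  by_contra h
  obtain ⟨⟨⟨e, x⟩, hx0, hx⟩, hxT, hne, hmul⟩ := hT _ h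
  apply ha
  simp only [vB, Prod.mk_mul_mk, zero_mul, Prod.mk_eq_zero, true_and] at hmul
  have hx' : x = 0 := by simpa using hu.mul_right_eq_zero.1 hmul
  subst hx'
  have he : e = 0 ∨ e = 1 := zmod2_cases e
  rcases he with rfl | rfl
  · exact absurd rfl hx0
  · exact hxT

theorem card_le_two {R : Type*} [CommRing R] [Nontrivial R] {P : Finset (Set (ZDV (ZMod 2 × R)))}
    (hP : IsGDAPartition (zdGraph (ZMod 2 × R)) P) : P.card ≤ 2 := by
  obtain ⟨h1, h2, h3⟩ := hP
  have hA : vA R ∈ ⋃₀ (P : Set (Set (ZDV (ZMod 2 × R)))) := by rw [h2]; trivial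
  obtain ⟨S, hS, hAS⟩ := hA
  have hE : (P.erase S).card ≤ 1 := by
    rw [Finset.card_le_one]
    have key : ∀ T ∈ P.erase S, vB (1 : R) one_ne_zero ∈ T := by
      intro T hT
      rw [Finset.mem_erase] at hT
      refine unit_mem (h1 T hT.2).2 ?_ 1 isUnit_one
      intro h
      exact Set.disjoint_left.1 (h3 hT.2 hS hT.1) h hAS
    intro T hT T' hT'
    by_contra hne
    exact Set.disjoint_left.1 (h3 (Finset.mem_of_mem_erase hT) (Finset.mem_of_mem_erase hT') hne)
      (key T hT) (key T' hT')
  have := Finset.card_erase_add_one (s := P) (a := S) hS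
  omega

theorem goodRing_of_partition {R : Type*} [CommRing R] [IsLocalRing R] [Finite R]
    (hR : ¬ IsField R) {P : Finset (Set (ZDV (ZMod 2 × R)))}
    (hP : IsGDAPartition (zdGraph (ZMod 2 × R)) P) (hc : 2 ≤ P.card) : GoodRing R := by
  obtain ⟨h1, h2, h3⟩ := hP
  have hA : vA R ∈ ⋃₀ (P : Set (Set (ZDV (ZMod 2 × R)))) := by rw [h2]; trivial
  obtain ⟨S, hS, hAS⟩ := hA
  obtain ⟨T, hT, hTS⟩ := Finset.exists_mem_ne (by omega : 1 < P.card) S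
  have hdis : Disjoint T S := h3 hT hS hTS
  have hAT : vA R ∉ T := fun h => Set.disjoint_left.1 hdis h hAS
  have hunit := unit_mem (h1 T hT).2 hAT
  have hunitS : ∀ (u : R) (hu : IsUnit u), vB u hu.ne_zero ∉ S :=
    fun u hu h => Set.disjoint_left.1 hdis (hunit u hu) h
  set m : Set R := (IsLocalRing.maximalIdeal R : Set R) with hm
  let A : Set R := {r | ∃ h : r ≠ 0, vB r h ∈ S}
  let B : Set R := {r | ∃ h : r ≠ 0, vB r h ∉ S}
  have hA0 : (0 : R) ∉ A := fun ⟨h, _⟩ => h rfl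
  have hAm : insert 0 A ⊆ m := by
    intro r hr
    rcases hr with rfl | ⟨h, hr⟩
    · exact Ideal.zero_mem _
    · change r ∈ IsLocalRing.maximalIdeal R
      rw [IsLocalRing.mem_maximalIdeal, mem_nonunits_iff]
      exact fun hu => hunitS r hu hr
  have h1m : (fun r => 1 + r) '' m ⊆ B := by
    rintro _ ⟨r, hr, rfl⟩
    have hu : IsUnit (1 + r) := by
      by_contra hu
      have hu' : 1 + r ∈ IsLocalRing.maximalIdeal R := hu
      have : (1 : R) ∈ IsLocalRing.maximalIdeal R := by
        have := Ideal.sub_mem _ hu' hr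
        simpa using this
      exact this isUnit_one
    exact ⟨hu.ne_zero, hunitS _ hu⟩
  have hadj : ∀ u : ZDV (ZMod 2 × R), (zdGraph (ZMod 2 × R)).Adj (vA R) u →
      ∃ h : u.1.2 ≠ 0, u = vB u.1.2 h := by
    rintro ⟨⟨e, x⟩, hx0, hx⟩ ⟨hne, hmul⟩
    simp only [vA, Prod.mk_mul_mk, zero_mul, Prod.mk_eq_zero, and_true, one_mul] at hmul
    subst hmul
    exact ⟨fun h => hx0 (by simpa using h), rfl⟩
  have hadjB : ∀ (r : R) (h : r ≠ 0), (zdGraph (ZMod 2 × R)).Adj (vA R) (vB r h) := by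
    intro r h
    refine ⟨?_, by simp [vA, vB]⟩
    intro h'
    have := congrArg (fun z => z.1.2) h'
    exact h this.symm
  have hBd : B.ncard ≤ degIn (zdGraph (ZMod 2 × R)) Sᶜ (vA R) := by
    refine le_trans (Set.ncard_le_ncard ?_ (Set.toFinite _))
      (Set.ncard_image_le (f := fun u : ZDV (ZMod 2 × R) => u.1.2) (Set.toFinite _))
    rintro r ⟨h, hr⟩
    exact ⟨vB r h, ⟨hr, hadjB r h⟩, rfl⟩
  have hAd : degIn (zdGraph (ZMod 2 × R)) S (vA R) ≤ A.ncard := by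
    refine Set.ncard_le_ncard_of_injOn (fun u : ZDV (ZMod 2 × R) => u.1.2) ?_ ?_ (Set.toFinite _)
    · rintro u ⟨hu, hau⟩
      obtain ⟨h, hh⟩ := hadj u hau
      exact ⟨h, hh ▸ hu⟩
    · rintro u ⟨hu, hau⟩ v ⟨hv, hav⟩ huv
      obtain ⟨h, hh⟩ := hadj u hau
      obtain ⟨h', hh'⟩ := hadj v hav
      rw [hh, hh']
      simp only at huv
      simp only [huv]
  have hle := (h1 S hS).1.2 _ hAS
  have hAi : (insert 0 A).ncard = A.ncard + 1 := Set.ncard_insert_of_notMem hA0 (Set.toFinite _)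
  have himg : ((fun r => 1 + r) '' m).ncard = m.ncard :=
    Set.ncard_image_of_injective _ (add_right_injective 1)
  have c1 := Set.ncard_le_ncard hAm (Set.toFinite _)
  have c2 := Set.ncard_le_ncard h1m (Set.toFinite _)
  have e1 : insert 0 A = m := Set.eq_of_subset_of_ncard_le hAm (by omega) (Set.toFinite _)
  have e2 : (fun r => 1 + r) '' m = B := Set.eq_of_subset_of_ncard_le h1m (by omega) (Set.toFinite _)
  have hmS : ∀ n ∈ m, ∀ h : n ≠ 0, vB n h ∈ S := by
    intro n hn h
    rw [← e1] at hn
    rcases hn with h' | ⟨_, h'⟩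
    · exact absurd h' h
    · exact h'
  have hzd : ∀ x y : R, x * y = 0 → x ≠ 0 → y ∈ m := by
    intro x y hxy hx
    change y ∈ IsLocalRing.maximalIdeal R
    rw [IsLocalRing.mem_maximalIdeal, mem_nonunits_iff]
    intro hu
    exact hx (hu.mul_left_eq_zero.1 hxy)
  obtain ⟨s, hs0, hs⟩ := exists_socle R
  have key : ∀ n ∈ m, n ≠ 0 → n = s := by
    intro n hn hn0
    have hsm : s ∈ m := hzd n s (by rw [mul_comm]; exact hs n hn) hn0
    have hnT : vB n hn0 ∉ T := fun h => Set.disjoint_left.1 hdis h (hmS n hn hn0)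
    obtain ⟨v, hxT, hne, hmul⟩ := (h1 T hT).2 _ hnT
    have hnx : n * v.1.2 = 0 := congrArg Prod.snd hmul
    have hxm : v.1.2 ∈ m := hzd _ _ hnx hn0
    have hv1 : v.1.1 ≠ 0 := by
      intro h
      have hx0 : v.1.2 ≠ 0 := fun h' => v.2.1 (Prod.ext h h')
      have : v = vB v.1.2 hx0 := Subtype.ext (Prod.ext h rfl)
      exact Set.disjoint_left.1 hdis hxT (this ▸ hmS _ hxm hx0)
    have hv1' : v.1.1 = 1 := by
      generalize v.1.1 = e at hv1
      revert e; decide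
    have hx0 : v.1.2 ≠ 0 := by
      intro h
      apply hAT
      have : v = vA R := Subtype.ext (Prod.ext hv1' h)
      exact this ▸ hxT
    have hd0 : degIn (zdGraph (ZMod 2 × R)) T v = 0 := by
      unfold degIn
      rw [Set.ncard_eq_zero (Set.toFinite _)]
      apply Set.eq_empty_of_forall_notMem
      rintro u ⟨huT, _, hvu⟩
      have p1 : v.1.1 * u.1.1 = 0 := congrArg Prod.fst hvu
      have p2 : v.1.2 * u.1.2 = 0 := congrArg Prod.snd hvu
      rw [hv1', one_mul] at p1
      have hu0 : u.1.2 ≠ 0 := fun h' => u.2.1 (Prod.ext p1 h')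
      have : u = vB u.1.2 hu0 := Subtype.ext (Prod.ext p1 rfl)
      exact Set.disjoint_left.1 hdis huT (this ▸ hmS _ (hzd _ _ p2 hx0) hu0)
    have hle := (h1 T hT).1.2 v hxT
    rw [hd0] at hle
    unfold degIn at hle
    rw [zero_add, Set.ncard_le_one (Set.toFinite _)] at hle
    have mem : ∀ (y : R) (hy : y ≠ 0), y ∈ m → v.1.2 * y = 0 →
        vB y hy ∈ {u | u ∈ Tᶜ ∧ (zdGraph (ZMod 2 × R)).Adj v u} := by
      intro y hy hym hvy
      refine ⟨fun h => Set.disjoint_left.1 hdis h (hmS y hym hy), ?_, ?_⟩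
      · intro h
        exact hv1 (congrArg (fun z => z.1.1) h)
      · exact Prod.ext (by simp [vB]) hvy
    have := hle _ (mem n hn0 hn (by rw [mul_comm]; exact hnx)) _
      (mem s hs0 hsm (by rw [mul_comm]; exact hs _ hxm))
    exact congrArg (fun z => z.1.2) this
  have hsm : s ∈ m := by
    by_contra hsm
    apply hR
    have hu : IsUnit s := by
      by_contra h
      exact hsm h
    refine ⟨⟨0, 1, zero_ne_one⟩, mul_comm, ?_⟩
    intro a ha
    have hau : IsUnit a := by
      by_contra h
      exact hsm (key a h ha ▸ h)
    obtain ⟨b, hb⟩ := hau.exists_right_inv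
    exact ⟨b, hb⟩
  refine ⟨s, hs0, hs s hsm, ?_⟩
  have hmc : ∀ n ∈ m, n = 0 ∨ n = s := fun n hn => or_iff_not_imp_left.2 (key n hn)
  intro r
  by_cases hr0 : r = 0
  · exact Or.inl hr0
  by_cases hr : vB r hr0 ∈ S
  · have : r ∈ m := by rw [← e1]; exact Or.inr ⟨hr0, hr⟩
    rcases hmc r this with h | h <;> simp [h]
  · have : r ∈ B := ⟨hr0, hr⟩
    rw [← e2] at this
    obtain ⟨n, hn, rfl⟩ := this
    rcases hmc n hn with h | h <;> simp [h]

theorem partition_of_goodRing {R : Type*} [CommRing R] [Nontrivial R] (h : GoodRing R) :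
    ∃ P : Finset (Set (ZDV (ZMod 2 × R))),
      IsGDAPartition (zdGraph (ZMod 2 × R)) P ∧ P.card = 2 := by
  obtain ⟨s, h0, h1, h2⟩ := h
  have hs1 : 1 + s ≠ 0 := by
    intro h
    apply h0
    have : s * (1 + s) = s := by rw [mul_add, h1]; ring
    rw [← this, h, mul_zero]
  have hss : s ≠ 1 := by
    rintro rfl
    simp at h1
  let a := vA R
  let b : ZDV (ZMod 2 × R) := ⟨(1, s), by simp, (0, s), by simp [h0], by simp [h1]⟩
  let c := vB s h0
  let d := vB (1 : R) one_ne_zero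
  let e := vB (1 + s) hs1
  have hall : ∀ v, v = a ∨ v = b ∨ v = c ∨ v = d ∨ v = e := by
    rintro ⟨⟨x, r⟩, hv0, ⟨y, t⟩, hy0, hy⟩
    have hx : x = 0 ∨ x = 1 := zmod2_cases x
    have hyy : y = 0 ∨ y = 1 := zmod2_cases y
    simp only [Prod.mk_mul_mk, Prod.mk_eq_zero, ne_eq] at hy hy0 hv0
    rcases hx with rfl | rfl
    · rcases h2 r with rfl | rfl | rfl | rfl
      · simp at hv0
      · right; right; right; left; rfl
      · right; right; left; rfl
      · right; right; right; right; rfl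
    · simp only [one_mul] at hy
      rcases h2 r with rfl | rfl | rfl | rfl
      · left; rfl
      · simp only [one_mul] at hy; exact absurd hy hy0
      · right; left; rfl
      · exfalso
        apply hy0
        refine ⟨hy.1, ?_⟩
        linear_combination (1 - s) * hy.2 + t * h1
  have ne1 : a ≠ b := fun h => h0 (congrArg (fun z => z.1.2) h).symm
  have ne2 : a ≠ c := fun h => h0 (congrArg (fun z => z.1.2) h).symm
  have ne3 : a ≠ d := fun h => zero_ne_one (congrArg (fun z => z.1.2) h)
  have ne4 : a ≠ e := fun h => hs1 (congrArg (fun z => z.1.2) h).symm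
  have ne5 : b ≠ c := fun h => one_ne_zero (congrArg (fun z => z.1.1) h)
  have ne6 : c ≠ d := fun h => hss (congrArg (fun z => z.1.2) h)
  have ne7 : c ≠ e := by
    intro h
    have h' : s = 1 + s := congrArg (fun z => z.1.2) h
    exact one_ne_zero (α := R) (by linear_combination -h')
  have ne8 : b ≠ d := fun h => one_ne_zero (congrArg (fun z => z.1.1) h)
  have ne9 : b ≠ e := fun h => one_ne_zero (congrArg (fun z => z.1.1) h)
  have ne10 : d ≠ e := by
    intro h
    have h' : (1 : R) = 1 + s := congrArg (fun z => z.1.2) h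
    exact h0 (by linear_combination -h')
  set G := zdGraph (ZMod 2 × R) with hG
  have ac : G.Adj a c := ⟨ne2, by simp [a, c, vA, vB]⟩
  have ad : G.Adj a d := ⟨ne3, by simp [a, d, vA, vB]⟩
  have ae : G.Adj a e := ⟨ne4, by simp [a, e, vA, vB]⟩
  have bc : G.Adj b c := ⟨ne5, by simp [b, c, vB, h1]⟩
  have nab : ¬ G.Adj a b := by
    rintro ⟨_, h⟩
    simp [a, b, vA] at h
  have ncd : ¬ G.Adj c d := by
    rintro ⟨_, h⟩
    simp [c, d, vB, h0] at h
  have nce : ¬ G.Adj c e := by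
    rintro ⟨_, h⟩
    simp [c, e, vB, h0, h1, mul_add] at h
  have nbd : ¬ G.Adj b d := by
    rintro ⟨_, h⟩
    simp [b, d, vB, h0] at h
  have nbe : ¬ G.Adj b e := by
    rintro ⟨_, h⟩
    simp [b, e, vB, h0, h1, mul_add] at h
  have nde : ¬ G.Adj d e := by
    rintro ⟨_, h⟩
    simp [d, e, vB, hs1] at h
  clear_value a b c d e G
  have hone : ∀ (X : Set (ZDV (ZMod 2 × R))) (v w : ZDV (ZMod 2 × R)),
      (∀ u ∈ X, G.Adj v u → u = w) → degIn G X v ≤ 1 := by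
    intro X v w h
    have : {u | u ∈ X ∧ G.Adj v u} ⊆ {w} := fun u hu => h u hu.1 hu.2
    exact (Set.ncard_le_ncard this (Set.toFinite _)).trans (by simp)
  have htwo : ∀ (X : Set (ZDV (ZMod 2 × R))) (v w w' : ZDV (ZMod 2 × R)),
      (∀ u ∈ X, G.Adj v u → u = w ∨ u = w') → degIn G X v ≤ 2 := by
    intro X v w w' h
    have : {u | u ∈ X ∧ G.Adj v u} ⊆ {w, w'} := fun u hu => h u hu.1 hu.2
    exact (Set.ncard_le_ncard this (Set.toFinite _)).trans ((Set.ncard_insert_le _ _).trans (by simp))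
  have hfin : Finite (ZDV (ZMod 2 × R)) := by
    have : (Set.univ : Set (ZDV (ZMod 2 × R))) ⊆ {a, b, c, d, e} := fun v _ => hall v
    exact Set.finite_univ_iff.1 (Set.Finite.subset (Set.toFinite _) this)
  let S : Set (ZDV (ZMod 2 × R)) := {a, c}
  let T : Set (ZDV (ZMod 2 × R)) := {b, d, e}
  have hbS : b ∉ S := by simp [S, ne1.symm, ne5]
  have hdS : d ∉ S := by simp [S, ne3.symm, ne6.symm]
  have heS : e ∉ S := by simp [S, ne4.symm, ne7.symm]
  have haT : a ∉ T := by simp [T, ne1, ne3, ne4]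
  have hcT : c ∉ T := by simp [T, ne5.symm, ne6, ne7]
  have haS : a ∈ S := by simp [S]
  have hcS : c ∈ S := by simp [S]
  have hbT : b ∈ T := by simp [T]
  have hdT : d ∈ T := by simp [T]
  have heT : e ∈ T := by simp [T]
  have hST : S ≠ T := fun h => haT (h ▸ haS)
  have hdis : Disjoint S T := by
    rw [Set.disjoint_left]
    rintro v (rfl | rfl)
    · exact haT
    · exact hcT
  clear_value S T
  have gS : IsGlobalDefensiveAlliance G S := by
    refine ⟨⟨⟨a, haS⟩, ?_⟩, ?_⟩
    · intro v hv
      rcases hall v with rfl | rfl | rfl | rfl | rfl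
      · have h1 : degIn G Sᶜ v ≤ 2 := htwo _ _ d e (by
          intro u hu huv
          rcases hall u with rfl | rfl | rfl | rfl | rfl
          · exact absurd haS hu
          · exact absurd huv nab
          · exact absurd hcS hu
          · exact Or.inl rfl
          · exact Or.inr rfl)
        have h2 : 0 < degIn G S v := (Set.ncard_pos (Set.toFinite _)).2 ⟨c, hcS, ac⟩
        omega
      · exact absurd hv hbS
      · refine (hone _ _ b ?_).trans (by omega)
        intro u hu huv
        rcases hall u with rfl | rfl | rfl | rfl | rfl
        · exact absurd haS hu
        · rfl
        · exact absurd hcS hu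
        · exact absurd huv ncd
        · exact absurd huv nce
      · exact absurd hv hdS
      · exact absurd hv heS
    · intro v hv
      rcases hall v with rfl | rfl | rfl | rfl | rfl
      · exact absurd haS hv
      · exact ⟨_, hcS, bc⟩
      · exact absurd hcS hv
      · exact ⟨_, haS, ad.symm⟩
      · exact ⟨_, haS, ae.symm⟩
  have gT : IsGlobalDefensiveAlliance G T := by
    refine ⟨⟨⟨b, hbT⟩, ?_⟩, ?_⟩
    · intro v hv
      rcases hall v with rfl | rfl | rfl | rfl | rfl
      · exact absurd hv haT
      · refine (hone _ _ c ?_).trans (by omega)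
        intro u hu huv
        rcases hall u with rfl | rfl | rfl | rfl | rfl
        · exact absurd huv.symm nab
        · exact absurd hbT hu
        · rfl
        · exact absurd hdT hu
        · exact absurd heT hu
      · exact absurd hv hcT
      · refine (hone _ _ a ?_).trans (by omega)
        intro u hu huv
        rcases hall u with rfl | rfl | rfl | rfl | rfl
        · rfl
        · exact absurd hbT hu
        · exact absurd huv.symm ncd
        · exact absurd hdT hu
        · exact absurd heT hu
      · refine (hone _ _ a ?_).trans (by omega)
        intro u hu huv
        rcases hall u with rfl | rfl | rfl | rfl | rfl
        · rfl
        · exact absurd hbT hu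
        · exact absurd huv.symm nce
        · exact absurd hdT hu
        · exact absurd heT hu
    · intro v hv
      rcases hall v with rfl | rfl | rfl | rfl | rfl
      · exact ⟨_, hdT, ad⟩
      · exact absurd hbT hv
      · exact ⟨_, hbT, bc.symm⟩
      · exact absurd hdT hv
      · exact absurd heT hv
  refine ⟨{S, T}, ⟨?_, ?_, ?_⟩, Finset.card_pair hST⟩
  · intro X hX
    rw [Finset.mem_insert, Finset.mem_singleton] at hX
    rcases hX with rfl | rfl
    · exact gS
    · exact gT
  · rw [Set.eq_univ_iff_forall]
    intro v
    simp only [Finset.coe_insert, Finset.coe_singleton, Set.sUnion_insert, Set.sUnion_singleton]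
    rcases hall v with rfl | rfl | rfl | rfl | rfl
    · exact Or.inl haS
    · exact Or.inr hbT
    · exact Or.inl hcS
    · exact Or.inr hdT
    · exact Or.inr heT
  · intro X hX Y hY hXY
    simp only [Finset.coe_insert, Finset.coe_singleton, Set.mem_insert_iff,
      Set.mem_singleton_iff] at hX hY
    rcases hX with rfl | rfl <;> rcases hY with rfl | rfl
    · exact absurd rfl hXY
    · exact hdis
    · exact hdis.symm
    · exact absurd rfl hXY

theorem psiG_le_two (R : Type*) [CommRing R] [Nontrivial R] : psiG (zdGraph (ZMod 2 × R)) ≤ 2 := by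
  apply csSup_le'
  rintro n ⟨P, hP, rfl⟩
  exact card_le_two hP

/-- For a finite local commutative ring `R` which is not a field,
`Γ(ℤ₂ × R)` is partitionable into global defensive alliances iff `R ≅ ℤ₄` or
`R ≅ ℤ₂[X]/(X²)`; moreover in that case `ψ_g(Γ(ℤ₂ × R)) = 2`. -/
theorem stmt6 (R : Type*) [CommRing R] [IsLocalRing R] [Finite R] (hR : ¬ IsField R) :
    (PartitionableGDA (zdGraph (ZMod 2 × R)) ↔
      (Nonempty (R ≃+* ZMod 4) ∨
        Nonempty (R ≃+* (Polynomial (ZMod 2) ⧸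
          Ideal.span {(Polynomial.X : Polynomial (ZMod 2)) ^ 2})))) ∧
    (PartitionableGDA (zdGraph (ZMod 2 × R)) →
      psiG (zdGraph (ZMod 2 × R)) = 2) := by
  have hle := psiG_le_two R
  have hbdd : BddAbove {n : ℕ | ∃ P : Finset (Set (ZDV (ZMod 2 × R))),
      IsGDAPartition (zdGraph (ZMod 2 × R)) P ∧ P.card = n} := by
    refine ⟨2, ?_⟩
    rintro n ⟨P, hP, rfl⟩
    exact card_le_two hP
  refine ⟨⟨fun h => ?_, fun h => ?_⟩, fun h => le_antisymm hle h⟩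
  · have hne : {n : ℕ | ∃ P : Finset (Set (ZDV (ZMod 2 × R))),
        IsGDAPartition (zdGraph (ZMod 2 × R)) P ∧ P.card = n}.Nonempty := by
      rw [Set.nonempty_iff_ne_empty]
      intro he
      unfold PartitionableGDA psiG at h
      rw [he] at h
      simp at h
    obtain ⟨P, hP, hc⟩ := Nat.sSup_mem hne hbdd
    refine equiv_of_goodRing (goodRing_of_partition hR hP ?_)
    rw [hc]
    exact h
  · have hg : GoodRing R := by
      rcases h with ⟨⟨e⟩⟩ | ⟨⟨e⟩⟩
      · exact goodRing_of_equiv e goodRing_zmod4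
      · exact goodRing_of_equiv e goodRing_quot
    exact le_csSup hbdd (partition_of_goodRing hg)
end

section
/- Let p be a prime number and n ≥ 2 a positive integer. Then Γ(ℤ₂ × ℤ_{p^n}) is partitionable into global defensive alliances if and only if p = 2 and n = 2. -/
open Classical

theorem aux_ncard_unit (N : ℕ) [NeZero N] : Set.ncard {b : ZMod N | IsUnit b} = N.totient := by
  have h : {b : ZMod N | IsUnit b} = (fun u : (ZMod N)ˣ => (u : ZMod N)) '' Set.univ := by
    ext b
    simp [IsUnit]
  rw [h, Set.ncard_image_of_injective _ Units.val_injective, Set.ncard_univ,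
    Nat.card_eq_fintype_card, ZMod.card_units_eq_totient]

theorem aux_ncard_nonunit (N : ℕ) [NeZero N] (hN : 1 < N) :
    Set.ncard {b : ZMod N | b ≠ 0 ∧ ¬ IsUnit b} + 1 + N.totient = N := by
  have : Fact (1 < N) := ⟨hN⟩
  have h1 := Set.ncard_add_ncard_compl {b : ZMod N | IsUnit b}
  have h2 : {b : ZMod N | IsUnit b}ᶜ = insert 0 {b : ZMod N | b ≠ 0 ∧ ¬ IsUnit b} := by
    ext b
    by_cases hb : b = 0
    · simp [hb]
    · simp [hb]
  rw [h2, Set.ncard_insert_of_notMem (by simp), aux_ncard_unit, Nat.card_zmod] at h1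
  omega

theorem aux_ncard_ne (N : ℕ) [NeZero N] : Set.ncard {b : ZMod N | b ≠ 0} + 1 = N := by
  have h1 := Set.ncard_add_ncard_compl {b : ZMod N | b ≠ 0}
  have h2 : {b : ZMod N | b ≠ 0}ᶜ = {0} := by ext b; simp
  rw [h2, Set.ncard_singleton, Nat.card_zmod] at h1
  exact h1

theorem aux_zmod2 (a : ZMod 2) (h : a ≠ 0) : a = 1 := by
  revert a; decide

theorem aux_psi_s7 {V : Type*} [Finite V] (G : SimpleGraph V) :
    PartitionableGDA G ↔ ∃ P : Finset (Set V), IsGDAPartition G P ∧ 2 ≤ P.card := by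
  unfold PartitionableGDA psiG
  constructor
  · intro h
    by_contra hc
    push Not at hc
    have : sSup {n : ℕ | ∃ P : Finset (Set V), IsGDAPartition G P ∧ P.card = n} ≤ 1 := by
      apply csSup_le'
      rintro n ⟨P, hP, rfl⟩
      have := hc P hP
      omega
    omega
  · rintro ⟨P, hP, h⟩
    refine h.trans (le_csSup ⟨Nat.card (Set V), ?_⟩ ⟨P, hP, rfl⟩)
    rintro n ⟨Q, _, rfl⟩
    have := Fintype.ofFinite (Set V)
    rw [Nat.card_eq_fintype_card]
    exact Finset.card_le_univ Q

theorem aux_fwd (p n : ℕ) (hp : p.Prime) (hn : 2 ≤ n)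
    (h : PartitionableGDA (zdGraph (ZMod 2 × ZMod (p ^ n)))) : p = 2 ∧ n = 2 := by
  have hN : 1 < p ^ n := Nat.one_lt_pow (by omega) hp.one_lt
  have : Fact (1 < p ^ n) := ⟨hN⟩
  have : NeZero (p ^ n) := ⟨by omega⟩
  obtain ⟨P, ⟨hG, hU, hD⟩, hcard⟩ := (aux_psi_s7 _).1 h
  have h10 : ((1 : ZMod 2), (0 : ZMod (p ^ n))) ≠ 0 := by simp
  let x : ZDV (ZMod 2 × ZMod (p ^ n)) := ⟨(1, 0), h10, (0, 1), by simp, by simp⟩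
  let e : (b : ZMod (p ^ n)) → b ≠ 0 → ZDV (ZMod 2 × ZMod (p ^ n)) :=
    fun b hb => ⟨(0, b), by simpa using hb, (1, 0), h10, by simp⟩
  have hxA : x ∈ ⋃₀ (P : Set (Set _)) := by rw [hU]; trivial
  obtain ⟨A, hAP, hxA⟩ := hxA
  obtain ⟨B, hBP, hBA⟩ := Finset.exists_mem_ne (by omega : 1 < P.card) A
  have hdis : Disjoint A B := hD hAP hBP hBA.symm
  have hAB : ∀ u, u ∈ A → u ∉ B := fun u h1 h2 => Set.disjoint_left.1 hdis h1 h2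
  have hxB : x ∉ B := hAB x hxA
  obtain ⟨⟨-, hAd⟩, -⟩ := hG A hAP
  obtain ⟨⟨-, hBd⟩, hBdom⟩ := hG B hBP
  -- leaves lie in B
  have hleaf : ∀ b (hb : b ≠ 0), IsUnit b → e b hb ∈ B := by
    intro b hb hu
    by_contra hc
    obtain ⟨u, huB, -, hmul⟩ := hBdom _ hc
    obtain ⟨⟨a, w⟩, hne, hz⟩ := u
    simp only [e, Prod.mk_mul_mk, Prod.mk_eq_zero] at hmul
    have hw : w = 0 := by simpa using (hu.mul_right_eq_zero).1 hmul.2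
    subst hw
    have ha : a = 1 := aux_zmod2 a (by rintro rfl; exact hne rfl)
    subst ha
    exact hxB huB
  -- neighbours of x
  have hadjx : ∀ u, (zdGraph (ZMod 2 × ZMod (p ^ n))).Adj x u →
      ∃ hb : u.1.2 ≠ 0, u = e u.1.2 hb := by
    rintro ⟨⟨a, w⟩, hne, hz⟩ ⟨-, hmul⟩
    simp only [x, Prod.mk_mul_mk, Prod.mk_eq_zero, one_mul] at hmul
    obtain ⟨rfl, -⟩ := hmul
    exact ⟨by rintro (rfl : w = 0); exact hne rfl, rfl⟩
  have hadjx' : ∀ b hb, (zdGraph (ZMod 2 × ZMod (p ^ n))).Adj x (e b hb) := by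
    intro b hb
    refine ⟨?_, by simp [x, e]⟩
    intro h
    have := congrArg (fun u => u.1.1) h
    simp [x, e] at this
  have hinj : Set.InjOn (fun u : ZDV (ZMod 2 × ZMod (p ^ n)) => u.1.2)
      {u | (zdGraph (ZMod 2 × ZMod (p ^ n))).Adj x u} := by
    intro u hu v hv huv
    obtain ⟨h1, h2⟩ := hadjx u hu
    obtain ⟨h3, h4⟩ := hadjx v hv
    rw [h2, h4]
    simp only [e]
    simp only at huv
    simp [huv]
  have hsum : degIn (zdGraph (ZMod 2 × ZMod (p ^ n))) A x
      + degIn (zdGraph (ZMod 2 × ZMod (p ^ n))) Aᶜ x + 1 = p ^ n := by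
    have h1 : {u | (zdGraph (ZMod 2 × ZMod (p ^ n))).Adj x u} =
       {u | u ∈ A ∧ (zdGraph (ZMod 2 × ZMod (p ^ n))).Adj x u} ∪
       {u | u ∈ Aᶜ ∧ (zdGraph (ZMod 2 × ZMod (p ^ n))).Adj x u} := by
      ext u
      simp only [Set.mem_setOf_eq, Set.mem_union, Set.mem_compl_iff]
      tauto
    have h2 := Set.ncard_image_of_injOn hinj
    have h3 : (fun u : ZDV (ZMod 2 × ZMod (p ^ n)) => u.1.2) ''
      {u | (zdGraph (ZMod 2 × ZMod (p ^ n))).Adj x u} = {b | b ≠ 0} := by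
      ext b
      constructor
      · rintro ⟨u, hu, rfl⟩
        exact (hadjx u hu).1
      · intro hb
        exact ⟨e b hb, hadjx' b hb, rfl⟩
    have h4 := aux_ncard_ne (p ^ n)
    rw [← h3, h2, h1, Set.ncard_union_eq] at h4
    · exact h4
    · rw [Set.disjoint_left]
      rintro u ⟨h5, -⟩ ⟨h6, -⟩
      exact h6 h5
  have hsub : (fun u : ZDV (ZMod 2 × ZMod (p ^ n)) => u.1.2) ''
      {u | u ∈ A ∧ (zdGraph (ZMod 2 × ZMod (p ^ n))).Adj x u} ⊆ {b | b ≠ 0 ∧ ¬ IsUnit b} := by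
    rintro b ⟨u, ⟨huA, hu⟩, rfl⟩
    obtain ⟨h1, h2⟩ := hadjx u hu
    refine ⟨h1, fun hunit => ?_⟩
    have := hleaf _ h1 hunit
    rw [← h2] at this
    exact hAB u huA this
  have himg : ((fun u : ZDV (ZMod 2 × ZMod (p ^ n)) => u.1.2) ''
      {u | u ∈ A ∧ (zdGraph (ZMod 2 × ZMod (p ^ n))).Adj x u}).ncard =
      degIn (zdGraph (ZMod 2 × ZMod (p ^ n))) A x :=
    Set.ncard_image_of_injOn (hinj.mono (fun u hu => hu.2))
  have hle := Set.ncard_le_ncard hsub (Set.toFinite _)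
  rw [himg] at hle
  have hxd := hAd x hxA
  have hnon := aux_ncard_nonunit (p ^ n) hN
  have htot : (p ^ n).totient + p ^ (n - 1) = p ^ n := by
    rw [Nat.totient_prime_pow hp (by omega)]
    have h1 : p ^ n = p ^ (n - 1) * p := by rw [← pow_succ]; congr 1; omega
    rw [h1]
    obtain ⟨q, rfl⟩ : ∃ q, p = q + 1 := ⟨p - 1, by have := hp.pos; omega⟩
    simp; ring
  have hpn : p ^ n = p ^ (n - 1) * p := by rw [← pow_succ]; congr 1; omega
  have hp2 : p = 2 := by
    have h1 : p ^ (n - 1) * p ≤ p ^ (n - 1) * 2 := by omega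
    have := Nat.le_of_mul_le_mul_left h1 (Nat.pow_pos hp.pos)
    have := hp.two_le
    omega
  subst hp2
  refine ⟨rfl, ?_⟩
  by_contra hn2
  have hEq := Set.eq_of_subset_of_ncard_le hsub (by rw [himg]; omega) (Set.toFinite _)
  have hnuA : ∀ b (hb : b ≠ 0), ¬ IsUnit b → e b hb ∈ A := by
    intro b hb hu
    have : b ∈ {b : ZMod (2 ^ n) | b ≠ 0 ∧ ¬ IsUnit b} := ⟨hb, hu⟩
    rw [← hEq] at this
    obtain ⟨u, ⟨huA, hadj⟩, rfl⟩ := this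
    obtain ⟨h1, h2⟩ := hadjx u hadj
    rw [h2] at huA
    exact huA
  have h8 : 8 ≤ 2 ^ n := by
    calc 8 = 2 ^ 3 := rfl
      _ ≤ 2 ^ n := Nat.pow_le_pow_right (by omega) (by omega)
  have hk : ∀ k : ℕ, 0 < k → k < 8 → ((k : ℕ) : ZMod (2 ^ n)) ≠ 0 := by
    intro k h0 hk h
    rw [ZMod.natCast_eq_zero_iff] at h
    have := Nat.le_of_dvd h0 h
    omega
  have h2ne : (2 : ZMod (2 ^ n)) ≠ 0 := by exact_mod_cast hk 2 (by omega) (by omega)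
  have h4ne : (4 : ZMod (2 ^ n)) ≠ 0 := by exact_mod_cast hk 4 (by omega) (by omega)
  have hnil : IsNilpotent (2 : ZMod (2 ^ n)) := ⟨n, by
    have := ZMod.natCast_self (2 ^ n)
    push_cast at this
    exact this⟩
  have h2nu : ¬ IsUnit (2 : ZMod (2 ^ n)) := fun hu => hu.not_isNilpotent hnil
  have h4nu : ¬ IsUnit (4 : ZMod (2 ^ n)) := by
    intro hu
    apply h2nu
    rw [show (4 : ZMod (2 ^ n)) = 2 * 2 by norm_num] at hu
    exact isUnit_of_mul_isUnit_left hu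
  have h2A := hnuA 2 h2ne h2nu
  have h4A := hnuA 4 h4ne h4nu
  obtain ⟨u, huB, huadj⟩ := hBdom _ (hAB _ h2A)
  have hmul := huadj.2
  obtain ⟨⟨a, w⟩, hne, hz⟩ := u
  simp only [e, Prod.mk_mul_mk, Prod.mk_eq_zero, zero_mul, true_and] at hmul
  have ha : a = 1 := by
    apply aux_zmod2
    rintro rfl
    have hw : w ≠ 0 := by rintro rfl; exact hne rfl
    refine hAB _ (hnuA w hw ?_) huB
    intro hu
    exact h2ne (hu.mul_left_eq_zero.1 hmul)
  subst ha
  have hw : w ≠ 0 := by rintro rfl; exact hxB huB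
  have hd := hBd _ huB
  have h0 : degIn (zdGraph (ZMod 2 × ZMod (2 ^ n))) B ⟨(1, w), hne, hz⟩ = 0 := by
    unfold degIn
    rw [Set.ncard_eq_zero, Set.eq_empty_iff_forall_notMem]
    rintro ⟨⟨c, b⟩, hne', hz'⟩ ⟨hvB, -, hm⟩
    simp only [Prod.mk_mul_mk, Prod.mk_eq_zero, one_mul] at hm
    obtain ⟨rfl, hm⟩ := hm
    have hb : b ≠ 0 := by rintro rfl; exact hne' rfl
    refine hAB _ (hnuA b hb ?_) hvB
    intro hu
    exact hw (hu.mul_left_eq_zero.1 hm)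
  have h24 : e 2 h2ne ≠ e 4 h4ne := by
    intro h
    have h1 := congrArg (fun u => u.1.2) h
    simp only [e] at h1
    apply h2ne
    linear_combination h1 * (-1)
  have h2 : 2 ≤ degIn (zdGraph (ZMod 2 × ZMod (2 ^ n))) Bᶜ ⟨(1, w), hne, hz⟩ := by
    refine (Set.ncard_pair h24).symm.le.trans (Set.ncard_le_ncard ?_ (Set.toFinite _))
    have hne1 : ∀ b hb, (⟨(1, w), hne, hz⟩ : ZDV (ZMod 2 × ZMod (2 ^ n))) ≠ e b hb := by
      intro b hb h
      have := congrArg (fun u => u.1.1) h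
      simp [e] at this
    rintro v (rfl | rfl)
    · refine ⟨hAB _ h2A, hne1 2 h2ne, ?_⟩
      simp only [e, Prod.mk_mul_mk, Prod.mk_eq_zero, mul_zero, true_and]
      linear_combination hmul
    · refine ⟨hAB _ h4A, hne1 4 h4ne, ?_⟩
      simp only [e, Prod.mk_mul_mk, Prod.mk_eq_zero, mul_zero, true_and]
      linear_combination 2 * hmul
  omega

theorem aux_deg {R : Type*} [CommRing R] [Fintype R] [DecidableEq R] (s : R → Bool) (v : ZDV R) :
    degIn (zdGraph R) {u | s u.1 = true} v = (Finset.univ.filter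
      (fun u : R => (u ≠ 0 ∧ ∃ y : R, y ≠ 0 ∧ u * y = 0) ∧
        s u = true ∧ v.1 ≠ u ∧ v.1 * u = 0)).card := by
  unfold degIn
  rw [← Set.ncard_image_of_injective _ Subtype.val_injective, ← Set.ncard_coe_finset]
  congr 1
  ext u
  simp only [Set.mem_image, Set.mem_setOf_eq, Finset.coe_filter, Finset.mem_univ, true_and, zdGraph]
  constructor
  · rintro ⟨w, ⟨h1, h2, h3⟩, rfl⟩
    exact ⟨w.2, h1, fun h => h2 (Subtype.ext h), h3⟩
  · rintro ⟨h0, h1, h2, h3⟩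
    exact ⟨⟨u, h0⟩, ⟨h1, fun h => h2 (congrArg Subtype.val h), h3⟩, rfl⟩

theorem aux_gda {R : Type*} [CommRing R] [Fintype R] [DecidableEq R] (s : R → Bool)
    (h1 : ∃ u : R, (u ≠ 0 ∧ ∃ y : R, y ≠ 0 ∧ u * y = 0) ∧ s u = true)
    (h2 : ∀ v : R, (v ≠ 0 ∧ ∃ y : R, y ≠ 0 ∧ v * y = 0) → s v = true →
      (Finset.univ.filter (fun u : R => (u ≠ 0 ∧ ∃ y : R, y ≠ 0 ∧ u * y = 0) ∧
        (!s u) = true ∧ v ≠ u ∧ v * u = 0)).card ≤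
      (Finset.univ.filter (fun u : R => (u ≠ 0 ∧ ∃ y : R, y ≠ 0 ∧ u * y = 0) ∧
        s u = true ∧ v ≠ u ∧ v * u = 0)).card + 1)
    (h3 : ∀ v : R, (v ≠ 0 ∧ ∃ y : R, y ≠ 0 ∧ v * y = 0) → ¬ s v = true →
      ∃ u : R, (u ≠ 0 ∧ ∃ y : R, y ≠ 0 ∧ u * y = 0) ∧ s u = true ∧ v ≠ u ∧ v * u = 0) :
    IsGlobalDefensiveAlliance (zdGraph R) {u | s u.1 = true} := by
  refine ⟨⟨?_, ?_⟩, ?_⟩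
  · obtain ⟨u, hu, hs⟩ := h1
    exact ⟨⟨u, hu⟩, hs⟩
  · intro v hv
    have hc : {u : ZDV R | s u.1 = true}ᶜ = {u : ZDV R | (fun r => !s r) u.1 = true} := by
      ext u; simp
    rw [hc, aux_deg s, aux_deg (fun r => !s r)]
    exact h2 v.1 v.2 hv
  · intro v hv
    obtain ⟨u, h0, h4, h5, h6⟩ := h3 v.1 v.2 hv
    exact ⟨⟨u, h0⟩, h4, fun h => h5 (congrArg Subtype.val h), h6⟩

def auxS : ZMod 2 × ZMod 4 → Bool := fun u => u == (1, 0) || u == (0, 2)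

set_option maxRecDepth 100000 in
theorem aux_bwd : PartitionableGDA (zdGraph (ZMod 2 × ZMod 4)) := by
  rw [aux_psi_s7]
  have hA : IsGlobalDefensiveAlliance (zdGraph (ZMod 2 × ZMod 4)) {u | auxS u.1 = true} :=
    aux_gda auxS (by decide) (by decide) (by decide)
  have hB : IsGlobalDefensiveAlliance (zdGraph (ZMod 2 × ZMod 4)) {u | (!auxS u.1) = true} :=
    aux_gda (fun u => !auxS u) (by decide) (by decide) (by decide)
  have hdis : Disjoint {u : ZDV (ZMod 2 × ZMod 4) | auxS u.1 = true}
      {u : ZDV (ZMod 2 × ZMod 4) | (!auxS u.1) = true} := by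
    rw [Set.disjoint_left]
    intro u h1 h2
    simp only [Set.mem_setOf_eq] at h1 h2
    simp [h1] at h2
  have hne : {u : ZDV (ZMod 2 × ZMod 4) | auxS u.1 = true} ≠ {u | (!auxS u.1) = true} := by
    intro h
    obtain ⟨u, hu⟩ := hA.1.1
    exact Set.disjoint_left.1 hdis hu (h ▸ hu)
  refine ⟨{{u | auxS u.1 = true}, {u | (!auxS u.1) = true}}, ⟨?_, ?_, ?_⟩, ?_⟩
  · intro S hS
    simp only [Finset.mem_insert, Finset.mem_singleton] at hS
    rcases hS with rfl | rfl
    · exact hA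
    · exact hB
  · ext u
    cases h : auxS u.1 <;> simp [h]
  · rw [Finset.coe_pair, Set.pairwise_pair_of_symm]
    exact fun _ => hdis
  · rw [Finset.card_pair hne]

/-- For a prime `p` and `n ≥ 2`, `Γ(ℤ₂ × ℤ_{p^n})` is partitionable into
global defensive alliances iff `p = 2` and `n = 2`. -/
theorem stmt7 (p n : ℕ) (hp : p.Prime) (hn : 2 ≤ n) :
    PartitionableGDA (zdGraph (ZMod 2 × ZMod (p ^ n))) ↔ (p = 2 ∧ n = 2) := by
  constructor
  · exact aux_fwd p n hp hn
  · rintro ⟨rfl, rfl⟩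
    exact aux_bwd
end

section
/- Let p and q be prime numbers with p ≥ 3 and q ≥ 3. Then Γ(ℤ_p × ℤ_q) is partitionable into global defensive alliances and ψ_g(Γ(ℤ_p × ℤ_q)) = 2. -/
open Classical

lemma degIn_of_mem {V : Type*} (G : SimpleGraph V) (A : Set V)
    (hG : ∀ u v, G.Adj u v ↔ (u ∈ A ↔ v ∉ A)) (S : Set V) (v : V) (hv : v ∈ A) :
    degIn G S v = (S ∩ Aᶜ).ncard := by
  unfold degIn
  congr 1
  ext u
  simp [hG, hv]

lemma degIn_of_notMem {V : Type*} (G : SimpleGraph V) (A : Set V)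
    (hG : ∀ u v, G.Adj u v ↔ (u ∈ A ↔ v ∉ A)) (S : Set V) (v : V) (hv : v ∉ A) :
    degIn G S v = (S ∩ A).ncard := by
  unfold degIn
  congr 1
  ext u
  simp [hG, hv]

lemma ncard_split {V : Type*} [Finite V] (S A : Set V) :
    (S ∩ A).ncard + (Sᶜ ∩ A).ncard = A.ncard := by
  have h := Set.ncard_inter_add_ncard_sdiff_eq_ncard A S
  rw [Set.inter_comm S A, Set.inter_comm Sᶜ A, ← Set.sdiff_eq]
  exact h

lemma half_isGDA {V : Type*} [Finite V] (G : SimpleGraph V) (A : Set V)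
    (hG : ∀ u v, G.Adj u v ↔ (u ∈ A ↔ v ∉ A)) (k m : ℕ) (hk : 1 ≤ k) (hm : 1 ≤ m)
    (S : Set V) (h1 : (S ∩ A).ncard = k) (h2 : (S ∩ Aᶜ).ncard = m)
    (h3 : (Sᶜ ∩ A).ncard = k) (h4 : (Sᶜ ∩ Aᶜ).ncard = m) :
    IsGlobalDefensiveAlliance G S := by
  obtain ⟨a, haS, haA⟩ : (S ∩ A).Nonempty := by
    apply Set.nonempty_of_ncard_ne_zero; omega
  obtain ⟨b, hbS, hbA⟩ : (S ∩ Aᶜ).Nonempty := by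
    apply Set.nonempty_of_ncard_ne_zero; omega
  refine ⟨⟨⟨a, haS⟩, fun v _ => ?_⟩, fun v _ => ?_⟩
  · by_cases hv : v ∈ A
    · rw [degIn_of_mem G A hG _ v hv, degIn_of_mem G A hG _ v hv]; omega
    · rw [degIn_of_notMem G A hG _ v hv, degIn_of_notMem G A hG _ v hv]; omega
  · by_cases hv : v ∈ A
    · exact ⟨b, hbS, (hG _ _).2 ⟨fun _ => hbA, fun _ => hv⟩⟩
    · exact ⟨a, haS, (hG _ _).2 ⟨fun h => absurd h hv, fun h => absurd haA h⟩⟩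

lemma alliance_lower {V : Type*} [Finite V] (G : SimpleGraph V) (A : Set V)
    (hG : ∀ u v, G.Adj u v ↔ (u ∈ A ↔ v ∉ A)) (k m : ℕ) (hk : 1 ≤ k)
    (hA : A.ncard = 2 * k) (hB : Aᶜ.ncard = 2 * m)
    (S : Set V) (hS : IsDefensiveAlliance G S) : m ≤ (S ∩ Aᶜ).ncard := by
  obtain ⟨⟨x, hx⟩, hd⟩ := hS
  have sA := ncard_split S A
  have sB := ncard_split S Aᶜ
  have key : ∀ v ∈ S, v ∈ A → m ≤ (S ∩ Aᶜ).ncard := by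
    intro v hv hvA
    have h := hd v hv
    rw [degIn_of_mem G A hG _ v hvA, degIn_of_mem G A hG _ v hvA] at h
    omega
  by_cases hxA : x ∈ A
  · exact key x hx hxA
  · have h := hd x hx
    rw [degIn_of_notMem G A hG _ x hxA, degIn_of_notMem G A hG _ x hxA] at h
    obtain ⟨a, haS, haA⟩ : (S ∩ A).Nonempty := by
      apply Set.nonempty_of_ncard_ne_zero; omega
    exact key a haS haA

lemma psiG_bipartite {V : Type*} [Finite V] (G : SimpleGraph V) (A : Set V)
    (hG : ∀ u v, G.Adj u v ↔ (u ∈ A ↔ v ∉ A)) (k m : ℕ) (hk : 1 ≤ k) (hm : 1 ≤ m)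
    (hA : A.ncard = 2 * k) (hB : Aᶜ.ncard = 2 * m) : psiG G = 2 := by
  apply IsGreatest.csSup_eq
  constructor
  · obtain ⟨A1, hA1, cA1⟩ := Set.exists_subset_card_eq (s := A) (n := k) (by omega)
    obtain ⟨B1, hB1, cB1⟩ := Set.exists_subset_card_eq (s := Aᶜ) (n := m) (by omega)
    have e1 : (A1 ∪ B1) ∩ A = A1 := by
      ext x
      have := @hA1 x
      have := @hB1 x
      simp only [Set.mem_inter_iff, Set.mem_union, Set.mem_compl_iff] at *
      tauto
    have e2 : (A1 ∪ B1) ∩ Aᶜ = B1 := by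
      ext x
      have := @hA1 x
      have := @hB1 x
      simp only [Set.mem_inter_iff, Set.mem_union, Set.mem_compl_iff] at *
      tauto
    have sA := ncard_split (A1 ∪ B1) A
    have sB := ncard_split (A1 ∪ B1) Aᶜ
    rw [e1] at sA
    rw [e2] at sB
    generalize hS : A1 ∪ B1 = S at *
    have g1 : IsGlobalDefensiveAlliance G S :=
      half_isGDA G A hG k m hk hm S (by rw [e1]; omega) (by rw [e2]; omega) (by omega) (by omega)
    have g2 : IsGlobalDefensiveAlliance G Sᶜ :=
      half_isGDA G A hG k m hk hm Sᶜ (by omega) (by omega)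
        (by rw [compl_compl, e1]; omega) (by rw [compl_compl, e2]; omega)
    have hne : S ≠ Sᶜ := by
      intro h
      obtain ⟨x, hx⟩ := g1.1.1
      have hx2 := hx
      rw [h] at hx2
      exact hx2 hx
    refine ⟨{S, Sᶜ}, ⟨?_, ?_, ?_⟩, Finset.card_pair hne⟩
    · intro T hT
      rw [Finset.mem_insert, Finset.mem_singleton] at hT
      rcases hT with rfl | rfl
      · exact g1
      · exact g2
    · simp
    · rw [Finset.coe_pair]
      exact Set.pairwise_pair.2 fun _ => ⟨disjoint_compl_right, disjoint_compl_left⟩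
  · rintro n ⟨P, ⟨hP, -, hdisj⟩, rfl⟩
    have h1 : P.card * m ≤ ∑ S ∈ P, (S ∩ Aᶜ).ncard := by
      rw [← smul_eq_mul]
      exact Finset.card_nsmul_le_sum P _ m
        fun S hS => alliance_lower G A hG k m hk hA hB S (hP S hS).1
    have h2 : ∑ S ∈ P, (S ∩ Aᶜ).ncard ≤ Aᶜ.ncard := by
      cases nonempty_fintype V
      simp only [Set.ncard_eq_toFinset_card']
      rw [← Finset.card_biUnion]
      · apply Finset.card_le_card
        intro x hx
        simp only [Finset.mem_biUnion, Set.mem_toFinset] at hx ⊢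
        obtain ⟨S, _, hx⟩ := hx
        exact hx.2
      · intro S hS T hT hne
        have := hdisj hS hT hne
        rw [Function.onFun, Set.disjoint_toFinset]
        exact this.mono Set.inter_subset_left Set.inter_subset_left
    rw [hB] at h2
    exact Nat.le_of_mul_le_mul_right (h1.trans h2) (by omega)

lemma ncard_nonzero_zmod (p : ℕ) (hp : p.Prime) : {x : ZMod p | x ≠ 0}.ncard = p - 1 := by
  have := Fact.mk hp
  have h : {x : ZMod p | x ≠ 0} = ({0} : Set (ZMod p))ᶜ := by ext; simp
  rw [h, Set.ncard_compl, Set.ncard_singleton, Nat.card_zmod]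

/-- For primes `p, q ≥ 3`, `Γ(ℤ_p × ℤ_q)` is partitionable into global
defensive alliances and `ψ_g(Γ(ℤ_p × ℤ_q)) = 2`. -/
theorem stmt9 (p q : ℕ) (hp : p.Prime) (hq : q.Prime) (hp3 : 3 ≤ p) (hq3 : 3 ≤ q) :
    PartitionableGDA (zdGraph (ZMod p × ZMod q)) ∧
    psiG (zdGraph (ZMod p × ZMod q)) = 2 := by
  have := Fact.mk hp
  have := Fact.mk hq
  have main : psiG (zdGraph (ZMod p × ZMod q)) = 2 := by
    obtain ⟨k, hk⟩ := hp.odd_of_ne_two (by omega)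
    obtain ⟨m, hm⟩ := hq.odd_of_ne_two (by omega)
    have hv : ∀ v : ZDV (ZMod p × ZMod q), (v.1.2 = 0 ∧ v.1.1 ≠ 0) ∨ (v.1.1 = 0 ∧ v.1.2 ≠ 0) := by
      rintro ⟨⟨x, y⟩, h0, ⟨z, w⟩, h1, h2⟩
      change (y = 0 ∧ x ≠ 0) ∨ (x = 0 ∧ y ≠ 0)
      simp only [ne_eq, Prod.mk_eq_zero, Prod.mk_mul_mk, mul_eq_zero] at h0 h1 h2 ⊢
      tauto
    have hA : {v : ZDV (ZMod p × ZMod q) | v.1.2 = 0}.ncard = p - 1 := by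
      rw [← ncard_nonzero_zmod p hp]
      refine Set.ncard_congr (fun v _ => v.1.1) ?_ ?_ ?_
      · intro v h
        have := hv v
        simp only [Set.mem_ofPred_eq] at *
        tauto
      · intro a b ha hb hab
        exact Subtype.ext (Prod.ext hab (ha.trans hb.symm))
      · intro x hx
        exact ⟨⟨(x, 0), by simpa using hx, (0, 1), by simp, by simp⟩, rfl, rfl⟩
    have hB : {v : ZDV (ZMod p × ZMod q) | v.1.2 = 0}ᶜ.ncard = q - 1 := by
      rw [← ncard_nonzero_zmod q hq]
      refine Set.ncard_congr (fun v _ => v.1.2) ?_ ?_ ?_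
      · intro v h
        exact h
      · intro a b ha hb hab
        have h1 := hv a
        have h2 := hv b
        simp only [Set.mem_compl_iff, Set.mem_ofPred_eq] at ha hb
        have h3 : a.1.1 = 0 := by tauto
        have h4 : b.1.1 = 0 := by tauto
        exact Subtype.ext (Prod.ext (h3.trans h4.symm) hab)
      · intro x hx
        exact ⟨⟨(0, x), by simpa using hx, (1, 0), by simp, by simp⟩, hx, rfl⟩
    refine psiG_bipartite _ {v | v.1.2 = 0} ?_ k m (by omega) (by omega)
      (by rw [hA]; omega) (by rw [hB]; omega)
    intro u v
    have h1 := hv u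
    have h2 := hv v
    have h3 : u = v → u.1.2 = v.1.2 := fun h => by rw [h]
    have h5 : (u.1 * v.1 = 0) ↔ (u.1.1 = 0 ∨ v.1.1 = 0) ∧ (u.1.2 = 0 ∨ v.1.2 = 0) := by
      rw [Prod.ext_iff]
      simp
    change (u ≠ v ∧ u.1 * v.1 = 0) ↔ (u.1.2 = 0 ↔ ¬ v.1.2 = 0)
    rw [h5]
    clear h5 hv hA hB
    by_cases a : u.1.2 = 0 <;> by_cases b : v.1.2 = 0 <;> simp_all
    · rintro rfl
      exact b a
    · rintro rfl
      exact a b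
  exact ⟨main.ge, main⟩
end

section
/- Let p be a prime number. Then Γ(ℤ₂ × ℤ₂ × ℤ_p) is partitionable into global defensive alliances if and only if p ∈ {2, 3}; namely, ψ_g(Γ(ℤ₂ × ℤ₂ × ℤ_p)) = 2 if p ∈ {2, 3}, and ψ_g(Γ(ℤ₂ × ℤ₂ × ℤ_p)) = 1 otherwise. -/
open Classical

/-- Units of `ZMod p` (as nonzero elements). -/
abbrev NZ (p : ℕ) : Type := {u : ZMod p // u ≠ 0}

section
variable {p : ℕ} [Fact p.Prime]

/-- The ring. -/
abbrev RR (p : ℕ) : Type := ZMod 2 × ZMod 2 × ZMod p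

def va : ZDV (RR p) := ⟨(1, 0, 0), by simp, (0, 1, 0), by simp, by simp⟩
def vb : ZDV (RR p) := ⟨(0, 1, 0), by simp, (1, 0, 0), by simp, by simp⟩
def vab : ZDV (RR p) := ⟨(1, 1, 0), by simp, (0, 0, 1), by simp, by simp⟩
def vC (u : NZ p) : ZDV (RR p) := ⟨(0, 0, u.1), by simp [u.2], (1, 0, 0), by simp, by simp⟩
def vaC (u : NZ p) : ZDV (RR p) := ⟨(1, 0, u.1), by simp, (0, 1, 0), by simp, by simp⟩
def vbC (u : NZ p) : ZDV (RR p) := ⟨(0, 1, u.1), by simp, (1, 0, 0), by simp, by simp⟩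

theorem vertex_cases (v : ZDV (RR p)) :
    v = va ∨ v = vb ∨ v = vab ∨ (∃ u, v = vC u) ∨ (∃ u, v = vaC u) ∨ (∃ u, v = vbC u) := by
  obtain ⟨⟨x, y, z⟩, h0, ⟨y1, y2, y3⟩, hy, hxy⟩ := v
  have key : ∀ x : ZMod 2, x = 0 ∨ x = 1 := by decide
  by_cases hz : z = 0
  · subst hz
    rcases key x with rfl | rfl <;> rcases key y with rfl | rfl
    · exact absurd rfl h0
    · right; left; rfl
    · left; rfl
    · right; right; left; rfl
  · rcases key x with rfl | rfl <;> rcases key y with rfl | rfl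
    · right; right; right; left; exact ⟨⟨z, hz⟩, rfl⟩
    · right; right; right; right; right; exact ⟨⟨z, hz⟩, rfl⟩
    · right; right; right; right; left; exact ⟨⟨z, hz⟩, rfl⟩
    · exfalso
      apply hy
      simp only [Prod.mk_mul_mk, Prod.mk_eq_zero, one_mul, mul_eq_zero, hz, false_or] at hxy
      simp [hxy]

theorem nbr_b (v : ZDV (RR p)) :
    (zdGraph (RR p)).Adj vb v ↔ v = va ∨ (∃ u, v = vC u) ∨ (∃ u, v = vaC u) := by
  constructor
  · rintro ⟨h1, h2⟩
    rcases vertex_cases v with rfl | rfl | rfl | ⟨u, rfl⟩ | ⟨u, rfl⟩ | ⟨u, rfl⟩ <;>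
      simp_all [va, vb, vab, vC, vaC, vbC]
  · rintro (rfl | ⟨u, rfl⟩ | ⟨u, rfl⟩) <;> refine ⟨?_, ?_⟩ <;> simp [va, vb, vC, vaC]

theorem nbr_a (v : ZDV (RR p)) :
    (zdGraph (RR p)).Adj va v ↔ v = vb ∨ (∃ u, v = vC u) ∨ (∃ u, v = vbC u) := by
  constructor
  · rintro ⟨h1, h2⟩
    rcases vertex_cases v with rfl | rfl | rfl | ⟨u, rfl⟩ | ⟨u, rfl⟩ | ⟨u, rfl⟩ <;>
      simp_all [va, vb, vab, vC, vaC, vbC]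
  · rintro (rfl | ⟨u, rfl⟩ | ⟨u, rfl⟩) <;> refine ⟨?_, ?_⟩ <;> simp [va, vb, vC, vbC]

theorem nbr_ab (v : ZDV (RR p)) :
    (zdGraph (RR p)).Adj vab v ↔ (∃ u, v = vC u) := by
  constructor
  · rintro ⟨h1, h2⟩
    rcases vertex_cases v with rfl | rfl | rfl | ⟨u, rfl⟩ | ⟨u, rfl⟩ | ⟨u, rfl⟩ <;>
      simp_all [va, vb, vab, vC, vaC, vbC]
  · rintro (⟨u, rfl⟩) <;> refine ⟨?_, ?_⟩ <;> simp [vab, vC]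

theorem nbr_aC (w : NZ p) (v : ZDV (RR p)) (h : (zdGraph (RR p)).Adj (vaC w) v) : v = vb := by
  obtain ⟨h1, h2⟩ := h
  have hw := w.2
  rcases vertex_cases v with rfl | rfl | rfl | ⟨⟨u, hu⟩, rfl⟩ | ⟨⟨u, hu⟩, rfl⟩ | ⟨⟨u, hu⟩, rfl⟩ <;>
    simp_all [va, vb, vab, vC, vaC, vbC]

theorem nbr_bC (w : NZ p) (v : ZDV (RR p)) (h : (zdGraph (RR p)).Adj (vbC w) v) : v = va := by
  obtain ⟨h1, h2⟩ := h
  have hw := w.2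
  rcases vertex_cases v with rfl | rfl | rfl | ⟨⟨u, hu⟩, rfl⟩ | ⟨⟨u, hu⟩, rfl⟩ | ⟨⟨u, hu⟩, rfl⟩ <;>
    simp_all [va, vb, vab, vC, vaC, vbC]

theorem nbr_C (w : NZ p) (v : ZDV (RR p)) (h : (zdGraph (RR p)).Adj (vC w) v) :
    v = va ∨ v = vb ∨ v = vab := by
  obtain ⟨h1, h2⟩ := h
  have hw := w.2
  rcases vertex_cases v with rfl | rfl | rfl | ⟨⟨u, hu⟩, rfl⟩ | ⟨⟨u, hu⟩, rfl⟩ | ⟨⟨u, hu⟩, rfl⟩ <;>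
    simp_all [va, vb, vab, vC, vaC, vbC]

theorem vC_inj : Function.Injective (vC (p := p)) := by
  intro u v h
  simpa [vC, Subtype.ext_iff] using h

theorem vaC_inj : Function.Injective (vaC (p := p)) := by
  intro u v h
  simpa [vaC, Subtype.ext_iff] using h

instance : Finite (ZDV (RR p)) := by
  haveI : NeZero p := ⟨(Fact.out : p.Prime).ne_zero⟩
  infer_instance

instance : Finite (NZ p) := by
  haveI : NeZero p := ⟨(Fact.out : p.Prime).ne_zero⟩
  infer_instance

theorem card_NZ : Nat.card (NZ p) = p - 1 := by
  haveI : NeZero p := ⟨(Fact.out : p.Prime).ne_zero⟩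
  rw [Nat.card_eq_fintype_card, Fintype.card_subtype_compl]
  simp

/-- number of `C`-vertices in `S` -/
noncomputable def cnt (S : Set (ZDV (RR p))) : ℕ := Set.ncard {u : NZ p | vC u ∈ S}

theorem cnt_add (S : Set (ZDV (RR p))) : cnt S + cnt Sᶜ = p - 1 := by
  rw [← card_NZ (p := p)]
  exact Set.ncard_add_ncard_compl {u : NZ p | vC u ∈ S}

theorem cnt_mono {S T : Set (ZDV (RR p))} (h : S ⊆ T) : cnt S ≤ cnt T :=
  Set.ncard_le_ncard (fun _ hu => h hu) (Set.toFinite _)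

theorem degIn_ab (S : Set (ZDV (RR p))) : degIn (zdGraph (RR p)) S vab = cnt S := by
  unfold degIn cnt
  rw [← Set.ncard_image_of_injective _ vC_inj]
  congr 1
  ext v
  simp only [nbr_ab, Set.mem_setOf_eq, Set.mem_image]
  constructor
  · rintro ⟨h, u, rfl⟩; exact ⟨u, h, rfl⟩
  · rintro ⟨u, h, rfl⟩; exact ⟨h, u, rfl⟩

theorem degIn_b_upper (S : Set (ZDV (RR p))) (h : ∀ u, vaC u ∉ S) :
    degIn (zdGraph (RR p)) S vb ≤ cnt S + 1 := by
  unfold degIn cnt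
  rw [← Set.ncard_image_of_injective _ vC_inj]
  refine le_trans (Set.ncard_le_ncard ?_ (Set.toFinite _)) (Set.ncard_insert_le va _)
  rintro v ⟨hv, hadj⟩
  rcases (nbr_b v).1 hadj with rfl | ⟨u, rfl⟩ | ⟨u, rfl⟩
  · exact Or.inl rfl
  · exact Or.inr ⟨u, hv, rfl⟩
  · exact absurd hv (h u)

theorem degIn_b_upper2 (S : Set (ZDV (RR p))) (h : ∀ u, vaC u ∉ S) (ha : va ∉ S) :
    degIn (zdGraph (RR p)) S vb ≤ cnt S := by
  unfold degIn cnt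
  rw [← Set.ncard_image_of_injective _ vC_inj]
  refine Set.ncard_le_ncard ?_ (Set.toFinite _)
  rintro v ⟨hv, hadj⟩
  rcases (nbr_b v).1 hadj with rfl | ⟨u, rfl⟩ | ⟨u, rfl⟩
  · exact absurd hv ha
  · exact ⟨u, hv, rfl⟩
  · exact absurd hv (h u)

theorem disj_aC_C (A B : Set (NZ p)) : Disjoint (vaC '' A) (vC '' B) := by
  rw [Set.disjoint_left]
  rintro _ ⟨u, _, rfl⟩ ⟨w, _, h⟩
  simp [vaC, vC] at h

theorem degIn_b_lower (S : Set (ZDV (RR p))) (h : ∀ u, vaC u ∈ S) :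
    (p - 1) + cnt S ≤ degIn (zdGraph (RR p)) S vb := by
  unfold degIn cnt
  rw [← Set.ncard_image_of_injective _ vC_inj, ← card_NZ, ← Set.ncard_univ,
    ← Set.ncard_image_of_injective Set.univ vaC_inj,
    ← Set.ncard_union_eq (disj_aC_C _ _) (Set.toFinite _) (Set.toFinite _)]
  refine Set.ncard_le_ncard ?_ (Set.toFinite _)
  rintro v (⟨u, _, rfl⟩ | ⟨u, hu, rfl⟩)
  · exact ⟨h u, (nbr_b _).2 (Or.inr (Or.inr ⟨u, rfl⟩))⟩
  · exact ⟨hu, (nbr_b _).2 (Or.inr (Or.inl ⟨u, rfl⟩))⟩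

theorem degIn_b_lower2 (S : Set (ZDV (RR p))) (h : ∀ u, vaC u ∈ S) (ha : va ∈ S) :
    (p - 1) + cnt S + 1 ≤ degIn (zdGraph (RR p)) S vb := by
  unfold degIn cnt
  rw [← Set.ncard_image_of_injective _ vC_inj, ← card_NZ, ← Set.ncard_univ,
    ← Set.ncard_image_of_injective Set.univ vaC_inj,
    ← Set.ncard_union_eq (disj_aC_C _ _) (Set.toFinite _) (Set.toFinite _),
    ← Set.ncard_insert_of_notMem (a := va) _ (Set.toFinite _)]
  · refine Set.ncard_le_ncard ?_ (Set.toFinite _)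
    rintro v (rfl | ⟨u, _, rfl⟩ | ⟨u, hu, rfl⟩)
    · exact ⟨ha, (nbr_b _).2 (Or.inl rfl)⟩
    · exact ⟨h u, (nbr_b _).2 (Or.inr (Or.inr ⟨u, rfl⟩))⟩
    · exact ⟨hu, (nbr_b _).2 (Or.inr (Or.inl ⟨u, rfl⟩))⟩
  · rintro (⟨u, _, h⟩ | ⟨u, _, h⟩)
    · have := u.2
      simp [vaC, va] at h
      exact this h
    · simp [vC, va] at h

theorem leaf_a {S : Set (ZDV (RR p))} (h : IsGlobalDefensiveAlliance (zdGraph (RR p)) S)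
    (hb : vb ∉ S) (u : NZ p) : vaC u ∈ S := by
  by_contra hu
  obtain ⟨v, hv, hadj⟩ := h.2 _ hu
  rw [nbr_aC u v hadj] at hv
  exact hb hv

theorem leaf_b {S : Set (ZDV (RR p))} (h : IsGlobalDefensiveAlliance (zdGraph (RR p)) S)
    (ha : va ∉ S) (u : NZ p) : vbC u ∈ S := by
  by_contra hu
  obtain ⟨v, hv, hadj⟩ := h.2 _ hu
  rw [nbr_bC u v hadj] at hv
  exact ha hv

def one' : NZ p := ⟨1, one_ne_zero⟩

theorem part_unique {P : Finset (Set (ZDV (RR p)))} (h : IsGDAPartition (zdGraph (RR p)) P)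
    {S T : Set (ZDV (RR p))} (hS : S ∈ P) (hT : T ∈ P) {v : ZDV (RR p)} (h1 : v ∈ S) (h2 : v ∈ T) :
    S = T := by
  by_contra hne
  exact Set.disjoint_left.1 (h.2.2 hS hT hne) h1 h2

theorem card_le_two_s13 {P : Finset (Set (ZDV (RR p)))} (h : IsGDAPartition (zdGraph (RR p)) P) :
    P.card ≤ 2 := by
  by_contra hc
  push Not at hc
  obtain ⟨A, hA, B, hB, C, hC, hAB, hAC, hBC⟩ := Finset.two_lt_card.1 hc
  have key : ∀ S ∈ P, vb ∈ S ∨ vaC one' ∈ S := fun S hS => by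
    by_cases hb : vb ∈ S
    · exact Or.inl hb
    · exact Or.inr (leaf_a (h.1 S hS) hb _)
  rcases key A hA with a | a <;> rcases key B hB with b | b <;> rcases key C hC with c | c
  all_goals first
    | exact hAB (part_unique h hA hB a b)
    | exact hAC (part_unique h hA hC a c)
    | exact hBC (part_unique h hB hC b c)

theorem exists_part {P : Finset (Set (ZDV (RR p)))} (h : IsGDAPartition (zdGraph (RR p)) P)
    (v : ZDV (RR p)) : ∃ S ∈ P, v ∈ S := by
  have : v ∈ ⋃₀ (P : Set (Set (ZDV (RR p)))) := by rw [h.2.1]; trivial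
  simpa using this

theorem card_le_one (hp5 : 5 ≤ p) {P : Finset (Set (ZDV (RR p)))}
    (h : IsGDAPartition (zdGraph (RR p)) P) : P.card ≤ 1 := by
  by_contra hc
  push Not at hc
  obtain ⟨S, hS, hbS⟩ := exists_part h vb
  obtain ⟨T, hT, hne⟩ := Finset.exists_mem_ne hc S
  have hST : Disjoint T S := h.2.2 hT hS hne
  have hbT : vb ∉ T := fun hb => Set.disjoint_left.1 hST hb hbS
  have hlT := leaf_a (h.1 T hT) hbT
  have hlS : ∀ u, vaC u ∉ S := fun u hu => Set.disjoint_left.1 hST (hlT u) hu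
  have hdef := (h.1 S hS).1.2 vb hbS
  have hsum := cnt_add S
  by_cases ha : va ∈ S
  · have h1 := degIn_b_upper S hlS
    have h2 := degIn_b_lower Sᶜ hlS
    have h3 : 3 ≤ cnt S := by omega
    have hex : ∃ u, vC u ∈ S := by
      by_contra hno
      push Not at hno
      have : cnt S = 0 := by simp [cnt, hno]
      omega
    obtain ⟨u, hu⟩ := hex
    have huT : vC u ∉ T := fun hx => Set.disjoint_left.1 hST hx hu
    obtain ⟨v, hv, hadj⟩ := (h.1 T hT).2 _ huT
    have hvab : vab ∈ T := by
      rcases nbr_C u v hadj with rfl | rfl | rfl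
      · exact absurd ha (Set.disjoint_left.1 hST hv)
      · exact absurd hv hbT
      · exact hv
    have h4 := (h.1 T hT).1.2 _ hvab
    rw [degIn_ab, degIn_ab] at h4
    have h5 : cnt S ≤ cnt Tᶜ := cnt_mono (Set.disjoint_right.1 hST)
    have h6 : cnt T ≤ cnt Sᶜ := cnt_mono (Set.disjoint_left.1 hST)
    omega
  · have h1 := degIn_b_upper2 S hlS ha
    have h2 := degIn_b_lower2 Sᶜ hlS ha
    have h0 : cnt Sᶜ = 0 := by omega
    have hall : ∀ u, vC u ∈ S := by
      intro u
      by_contra hu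
      have := (Set.ncard_eq_zero (Set.toFinite _)).1 h0
      exact (Set.eq_empty_iff_forall_notMem.1 this u) hu
    obtain ⟨A, hA, haA⟩ := exists_part h va
    have hAS : Disjoint A S := h.2.2 hA hS (fun e => ha (e ▸ haA))
    have h3 := (h.1 A hA).1.2 va haA
    have h4 : degIn (zdGraph (RR p)) A va = 0 := by
      unfold degIn
      rw [Set.ncard_eq_zero (Set.toFinite _), Set.eq_empty_iff_forall_notMem]
      rintro v ⟨hv, hadj⟩
      have hvS := Set.disjoint_left.1 hAS hv
      rcases (nbr_a v).1 hadj with rfl | ⟨u, rfl⟩ | ⟨u, rfl⟩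
      · exact hvS hbS
      · exact hvS (hall u)
      · exact hvS (leaf_b (h.1 S hS) ha u)
    have h5 : 2 ≤ degIn (zdGraph (RR p)) Aᶜ va := by
      have hne2 : (vb : ZDV (RR p)) ≠ vC one' := by simp [vb, vC]
      unfold degIn
      refine (Set.ncard_pair hne2).symm.le.trans (Set.ncard_le_ncard ?_ (Set.toFinite _))
      rintro v (rfl | rfl)
      · exact ⟨Set.disjoint_right.1 hAS hbS, (nbr_a _).2 (Or.inl rfl)⟩
      · exact ⟨Set.disjoint_right.1 hAS (hall _), (nbr_a _).2 (Or.inr (Or.inl ⟨_, rfl⟩))⟩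
    omega

theorem part_one : IsGDAPartition (zdGraph (RR p)) {Set.univ} := by
  refine ⟨?_, by simp, by simp⟩
  intro S hS
  rw [Finset.mem_singleton] at hS
  subst hS
  refine ⟨⟨⟨va, trivial⟩, ?_⟩, fun v hv => absurd trivial hv⟩
  intro v _
  simp [degIn]

theorem psi_eq (n : ℕ) (hle : ∀ P, IsGDAPartition (zdGraph (RR p)) P → P.card ≤ n)
    (hex : ∃ P, IsGDAPartition (zdGraph (RR p)) P ∧ P.card = n) :
    psiG (zdGraph (RR p)) = n := by
  apply IsGreatest.csSup_eq
  refine ⟨hex, ?_⟩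
  rintro m ⟨P, hP, rfl⟩
  exact hle P hP

theorem pair_part (S : Set (ZDV (RR p)))
    (h1 : IsGlobalDefensiveAlliance (zdGraph (RR p)) S)
    (h2 : IsGlobalDefensiveAlliance (zdGraph (RR p)) Sᶜ) :
    ∃ P, IsGDAPartition (zdGraph (RR p)) P ∧ P.card = 2 := by
  have hne : S ≠ Sᶜ := by
    intro e
    obtain ⟨v, hv⟩ := h1.1.1
    have := e ▸ hv
    exact this hv
  refine ⟨{S, Sᶜ}, ⟨?_, ?_, ?_⟩, Finset.card_pair hne⟩
  · intro T hT
    rcases Finset.mem_insert.1 hT with rfl | hT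
    · exact h1
    · rw [Finset.mem_singleton.1 hT]; exact h2
  · simp
  · rw [Finset.coe_pair, Set.pairwise_pair]
    intro _
    exact ⟨disjoint_compl_right, disjoint_compl_left⟩

end

/-- Computable check of the alliance property. -/
theorem gda_of_check {V : Type} [Fintype V] (G : SimpleGraph V) (S : V → Prop)
    (adj : V → V → Prop) [DecidableRel adj] [DecidablePred S] (hadj : ∀ a b, G.Adj a b ↔ adj a b)
    (h1 : ∃ v, S v)
    (h2 : ∀ v, S v → (Finset.univ.filter (fun u => ¬ S u ∧ adj v u)).card ≤
      (Finset.univ.filter (fun u => S u ∧ adj v u)).card + 1)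
    (h3 : ∀ v, ¬ S v → 0 < (Finset.univ.filter (fun u => S u ∧ adj v u)).card) :
    IsGlobalDefensiveAlliance G {v | S v} := by
  refine ⟨⟨h1, ?_⟩, ?_⟩
  · intro v hv
    have := h2 v hv
    unfold degIn
    rw [← Set.ncard_coe_finset, ← Set.ncard_coe_finset] at this
    simpa [hadj] using this
  · intro v hv
    obtain ⟨u, hu'⟩ := Finset.card_pos.1 (h3 v hv)
    obtain ⟨hu, ha⟩ := (Finset.mem_filter.1 hu').2
    exact ⟨u, hu, (hadj _ _).2 ha⟩

theorem exists_two : ∃ P, IsGDAPartition (zdGraph (RR 2)) P ∧ P.card = 2 := by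
  apply pair_part {v : ZDV (RR 2) | v.1 = (1,0,0) ∨ v.1 = (0,1,0) ∨ v.1 = (0,0,1)}
  · exact gda_of_check _ (fun v : ZDV (RR 2) => v.1 = (1,0,0) ∨ v.1 = (0,1,0) ∨ v.1 = (0,0,1))
      (fun a b => a ≠ b ∧ a.1 * b.1 = 0) (fun _ _ => Iff.rfl)
      (by decide +kernel) (by decide +kernel) (by decide +kernel)
  · exact gda_of_check _ (fun v : ZDV (RR 2) => ¬ (v.1 = (1,0,0) ∨ v.1 = (0,1,0) ∨ v.1 = (0,0,1)))
      (fun a b => a ≠ b ∧ a.1 * b.1 = 0) (fun _ _ => Iff.rfl)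
      (by decide +kernel) (by decide +kernel) (by decide +kernel)

theorem exists_three : ∃ P, IsGDAPartition (zdGraph (RR 3)) P ∧ P.card = 2 := by
  apply pair_part {v : ZDV (RR 3) | v.1 = (1,0,0) ∨ v.1 = (0,1,0) ∨ v.1 = (0,0,1)}
  · exact gda_of_check _ (fun v : ZDV (RR 3) => v.1 = (1,0,0) ∨ v.1 = (0,1,0) ∨ v.1 = (0,0,1))
      (fun a b => a ≠ b ∧ a.1 * b.1 = 0) (fun _ _ => Iff.rfl)
      (by decide +kernel) (by decide +kernel) (by decide +kernel)
  · exact gda_of_check _ (fun v : ZDV (RR 3) => ¬ (v.1 = (1,0,0) ∨ v.1 = (0,1,0) ∨ v.1 = (0,0,1)))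
      (fun a b => a ≠ b ∧ a.1 * b.1 = 0) (fun _ _ => Iff.rfl)
      (by decide +kernel) (by decide +kernel) (by decide +kernel)

/-- For a prime `p`, `Γ(ℤ₂ × ℤ₂ × ℤ_p)` is partitionable into global
defensive alliances iff `p ∈ {2, 3}`; namely `ψ_g = 2` if `p ∈ {2, 3}` and `ψ_g = 1`
otherwise. -/
theorem stmt13 (p : ℕ) (hp : p.Prime) :
    (PartitionableGDA (zdGraph (ZMod 2 × ZMod 2 × ZMod p)) ↔ (p = 2 ∨ p = 3)) ∧
    ((p = 2 ∨ p = 3) → psiG (zdGraph (ZMod 2 × ZMod 2 × ZMod p)) = 2) ∧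
    (¬ (p = 2 ∨ p = 3) → psiG (zdGraph (ZMod 2 × ZMod 2 × ZMod p)) = 1) := by
  haveI : Fact p.Prime := ⟨hp⟩
  have h2 : (p = 2 ∨ p = 3) → psiG (zdGraph (ZMod 2 × ZMod 2 × ZMod p)) = 2 := by
    rintro (rfl | rfl)
    · exact psi_eq 2 (fun P hP => card_le_two_s13 hP) exists_two
    · exact psi_eq 2 (fun P hP => card_le_two_s13 hP) exists_three
  have h1 : ¬ (p = 2 ∨ p = 3) → psiG (zdGraph (ZMod 2 × ZMod 2 × ZMod p)) = 1 := by
    intro hn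
    have hp5 : 5 ≤ p := by
      have := hp.two_le
      have h4 : p ≠ 4 := by rintro rfl; exact absurd hp (by norm_num)
      omega
    exact psi_eq 1 (fun P hP => card_le_one hp5 hP) ⟨_, part_one, by simp⟩
  refine ⟨⟨?_, ?_⟩, h2, h1⟩
  · intro h
    by_contra hn
    unfold PartitionableGDA at h
    rw [h1 hn] at h
    omega
  · intro h
    unfold PartitionableGDA
    rw [h2 h]
end

section
/- Let p and q be prime numbers with p ≥ 3 and q ≥ 3. Then ψ_g(Γ(ℤ₂ × ℤ_p × ℤ_q)) = 1, i.e., Γ(ℤ₂ × ℤ_p × ℤ_q) is not partitionable into global defensive alliances. -/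
open Classical

theorem psiG_eq_one_aux {V : Type*} [Nonempty V] (G : SimpleGraph V)
    (h : ∀ P : Finset (Set V), IsGDAPartition G P → P.card ≤ 1) : psiG G = 1 := by
  unfold psiG
  apply IsGreatest.csSup_eq
  refine ⟨⟨{Set.univ}, ⟨?_, by simp, by simp⟩, by simp⟩, ?_⟩
  · intro S hS
    rw [Finset.mem_singleton] at hS
    subst hS
    refine ⟨⟨Set.univ_nonempty, ?_⟩, ?_⟩
    · intro v _
      simp [degIn]
    · intro v hv
      exact absurd (Set.mem_univ v) hv
  · rintro n ⟨P, hP, rfl⟩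
    exact h P hP

theorem no_two_parts (p q : ℕ) (hp : p.Prime) (hq : q.Prime) (hp3 : 3 ≤ p) (hq3 : 3 ≤ q)
    (S T : Set (ZDV (ZMod 2 × ZMod p × ZMod q)))
    (hS : IsGlobalDefensiveAlliance (zdGraph (ZMod 2 × ZMod p × ZMod q)) S)
    (hT : IsGlobalDefensiveAlliance (zdGraph (ZMod 2 × ZMod p × ZMod q)) T)
    (hd : ∀ x, x ∈ S → x ∉ T)
    (a : ZDV (ZMod 2 × ZMod p × ZMod q)) (ha : a.1 = (1, 0, 0)) (haS : a ∈ S) : False := by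
  haveI : Fact p.Prime := ⟨hp⟩
  haveI : Fact q.Prime := ⟨hq⟩
  let f : (ZMod p)ˣ × (ZMod q)ˣ → ZDV (ZMod 2 × ZMod p × ZMod q) := fun u =>
    ⟨(0, u.1, u.2), by simp, (1, 0, 0), by simp, by simp⟩
  let g : (ZMod p)ˣ ⊕ (ZMod q)ˣ → ZDV (ZMod 2 × ZMod p × ZMod q) := fun u =>
    match u with
    | Sum.inl u => ⟨(0, u, 0), by simp, (1, 0, 0), by simp, by simp⟩
    | Sum.inr u => ⟨(0, 0, u), by simp, (1, 0, 0), by simp, by simp⟩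
  have hf : Function.Injective f := by
    rintro ⟨u, v⟩ ⟨u', v'⟩ h
    have h' := congrArg Subtype.val h
    simp only [f, Prod.mk.injEq, Units.val_inj] at h'
    simp [h'.2.1, h'.2.2]
  have hg : Function.Injective g := by
    rintro (u | u) (v | v) h <;>
    · have h' := congrArg Subtype.val h
      simp [g, Units.val_inj] at h'
      try simp [h']
  have hcp : Nat.card (ZMod p)ˣ = p - 1 := by
    rw [Nat.card_eq_fintype_card, ZMod.card_units]
  have hcq : Nat.card (ZMod q)ˣ = q - 1 := by
    rw [Nat.card_eq_fintype_card, ZMod.card_units]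
  have hcf : (Set.range f).ncard = (p - 1) * (q - 1) := by
    rw [← Set.image_univ, Set.ncard_image_of_injective _ hf, Set.ncard_univ, Nat.card_prod,
      hcp, hcq]
  have hcg : (Set.range g).ncard = (p - 1) + (q - 1) := by
    rw [← Set.image_univ, Set.ncard_image_of_injective _ hg, Set.ncard_univ, Nat.card_sum,
      hcp, hcq]
  -- neighbours of `a`
  have hNa : ∀ x, (zdGraph (ZMod 2 × ZMod p × ZMod q)).Adj a x →
      x ∈ Set.range f ∨ x ∈ Set.range g := by
    rintro ⟨⟨x, y, z⟩, hx0, hx⟩ ⟨-, h⟩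
    rw [ha] at h
    simp at h
    subst h
    by_cases hy : y = 0
    · subst hy
      have hz : z ≠ 0 := by rintro rfl; exact hx0 rfl
      exact Or.inr ⟨Sum.inr (Units.mk0 z hz), by simp [g]⟩
    · by_cases hz : z = 0
      · subst hz
        exact Or.inr ⟨Sum.inl (Units.mk0 y hy), by simp [g]⟩
      · exact Or.inl ⟨(Units.mk0 y hy, Units.mk0 z hz), by simp [f]⟩
  have hadj : ∀ x : ZDV (ZMod 2 × ZMod p × ZMod q), x.1.1 = 0 →
      (zdGraph (ZMod 2 × ZMod p × ZMod q)).Adj a x := by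
    rintro ⟨⟨x, y, z⟩, hx0, hx⟩ h
    refine ⟨?_, ?_⟩
    · rintro rfl
      simp only at h ha
      rw [h] at ha
      simp at ha
    · rw [ha]
      simpa using h
  have haf : ∀ u, (zdGraph (ZMod 2 × ZMod p × ZMod q)).Adj a (f u) := fun u => hadj _ rfl
  have hag : ∀ u, (zdGraph (ZMod 2 × ZMod p × ZMod q)).Adj a (g u) := by
    rintro (u | u) <;> exact hadj _ rfl
  -- the leaves are in `T`
  have hfT : ∀ u, f u ∈ T := by
    intro u
    by_contra hu
    obtain ⟨w, hwT, -, hw⟩ := hT.2 _ hu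
    have hwa : w = a := by
      obtain ⟨⟨x, y, z⟩, hx0, hx⟩ := w
      simp [f] at hw
      obtain ⟨rfl, rfl⟩ := hw
      apply Subtype.ext
      rw [ha]
      have hx1 : x ≠ 0 := by rintro rfl; exact hx0 rfl
      have h01 : ∀ t : ZMod 2, t ≠ 0 → t = 1 := by decide
      have : x = 1 := h01 x hx1
      simp [this]
    subst hwa
    exact hd _ haS hwT
  have hfS : ∀ u, f u ∉ S := fun u hu => hd _ hu (hfT u)
  have hgS : ∀ u, g u ∈ S := by
    intro u
    by_contra hu
    have h1 := hS.1.2 a haS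
    unfold degIn at h1
    have h2 : (insert (g u) (Set.range f)).ncard ≤
        Set.ncard {w | w ∈ Sᶜ ∧ (zdGraph (ZMod 2 × ZMod p × ZMod q)).Adj a w} := by
      apply Set.ncard_le_ncard _ (Set.toFinite _)
      rintro w (rfl | ⟨v, rfl⟩)
      · exact ⟨hu, hag u⟩
      · exact ⟨hfS v, haf v⟩
    have hgf : g u ∉ Set.range f := by
      rintro ⟨v, hv⟩
      have h' := congrArg Subtype.val hv
      rcases u with u | u <;> simp [f, g] at h'
    rw [Set.ncard_insert_of_notMem hgf (Set.toFinite _), hcf] at h2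
    have h3 : Set.ncard {w | w ∈ S ∧ (zdGraph (ZMod 2 × ZMod p × ZMod q)).Adj a w} <
        (Set.range g).ncard := by
      apply Set.ncard_lt_ncard _ (Set.toFinite _)
      refine ⟨?_, fun h => hu (h ⟨u, rfl⟩).1⟩
      rintro w ⟨hw, hwa⟩
      rcases hNa w hwa with ⟨v, rfl⟩ | h
      · exact absurd hw (hfS v)
      · exact h
    rw [hcg] at h3
    obtain ⟨m, rfl⟩ := Nat.exists_eq_add_of_le hp3
    obtain ⟨n, rfl⟩ := Nat.exists_eq_add_of_le hq3
    have e1 : 3 + m - 1 = m + 2 := by omega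
    have e2 : 3 + n - 1 = n + 2 := by omega
    rw [e1, e2] at h2 h3
    nlinarith [Nat.zero_le (m * n)]
  let v : ZDV (ZMod 2 × ZMod p × ZMod q) := ⟨(1, 1, 0), by simp, (0, 0, 1), by simp, by simp⟩
  have hNv : ∀ x, (zdGraph (ZMod 2 × ZMod p × ZMod q)).Adj v x → x ∈ S := by
    rintro ⟨⟨x, y, z⟩, hx0, hx⟩ ⟨-, h⟩
    simp [v] at h
    obtain ⟨rfl, rfl⟩ := h
    have hz : z ≠ 0 := by rintro rfl; exact hx0 rfl
    exact hgS (Sum.inr (Units.mk0 z hz))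
  by_cases hv : v ∈ T
  · have h1 := hT.1.2 v hv
    unfold degIn at h1
    have h2 : {w | w ∈ T ∧ (zdGraph (ZMod 2 × ZMod p × ZMod q)).Adj v w} = ∅ := by
      ext w
      simp only [Set.mem_ofPred_eq, Set.mem_empty_iff_false, iff_false]
      rintro ⟨hw, hw'⟩
      exact hd _ (hNv w hw') hw
    have h3 : (Set.range (g ∘ Sum.inr)).ncard ≤
        Set.ncard {w | w ∈ Tᶜ ∧ (zdGraph (ZMod 2 × ZMod p × ZMod q)).Adj v w} := by
      apply Set.ncard_le_ncard _ (Set.toFinite _)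
      rintro w ⟨u, rfl⟩
      refine ⟨hd _ (hgS (Sum.inr u)), ?_, ?_⟩
      · intro h
        have h' := congrArg Subtype.val h
        simp [g, v] at h'
      · simp [g, v]
    rw [← Set.image_univ, Set.ncard_image_of_injective _ (hg.comp Sum.inr_injective),
      Set.ncard_univ, hcq] at h3
    rw [h2, Set.ncard_empty] at h1
    omega
  · obtain ⟨w, hwT, hw⟩ := hT.2 v hv
    exact hd _ (hNv w hw) hwT

/-- For primes `p, q ≥ 3`, `ψ_g(Γ(ℤ₂ × ℤ_p × ℤ_q)) = 1`, i.e. the graph is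
not partitionable into global defensive alliances. -/
theorem stmt15 (p q : ℕ) (hp : p.Prime) (hq : q.Prime) (hp3 : 3 ≤ p) (hq3 : 3 ≤ q) :
    psiG (zdGraph (ZMod 2 × ZMod p × ZMod q)) = 1 ∧
    ¬ PartitionableGDA (zdGraph (ZMod 2 × ZMod p × ZMod q)) := by
  haveI : Fact p.Prime := ⟨hp⟩
  haveI : Fact q.Prime := ⟨hq⟩
  let a : ZDV (ZMod 2 × ZMod p × ZMod q) := ⟨(1, 0, 0), by simp, (0, 1, 0), by simp, by simp⟩
  haveI : Nonempty (ZDV (ZMod 2 × ZMod p × ZMod q)) := ⟨a⟩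
  have key : psiG (zdGraph (ZMod 2 × ZMod p × ZMod q)) = 1 := by
    apply psiG_eq_one_aux
    rintro P ⟨h1, h2, h3⟩
    by_contra hc
    have ha : a ∈ ⋃₀ (P : Set (Set (ZDV (ZMod 2 × ZMod p × ZMod q)))) := by
      rw [h2]; trivial
    obtain ⟨S, hS, haS⟩ := ha
    obtain ⟨T, hT, hTS⟩ := Finset.exists_mem_ne (by omega : 1 < P.card) S
    exact no_two_parts p q hp hq hp3 hq3 S T (h1 S hS) (h1 T hT)
      (fun x hx hx' => Set.disjoint_left.mp (h3 hS hT hTS.symm) hx hx') a rfl haS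
  refine ⟨key, ?_⟩
  unfold PartitionableGDA
  omega
end

section
/- Let R be a finite commutative ring with γ_a(Γ(R)) = 1. Then the following are equivalent: (1) Γ(R) is partitionable into global defensive alliances; (2) |Z(R)| = 3; (3) R is isomorphic to one of the rings ℤ₂ × ℤ₂, ℤ₉, ℤ₃[X]/(X²). -/
open Classical

theorem aux_gamma (R : Type*) [CommRing R] [Finite R]
    (h : gammaA (zdGraph R) = 1) :
    ∃ v : ZDV R, (∀ u : ZDV R, u ≠ v → (v : R) * u = 0) ∧
      ∀ u w : ZDV R, u ≠ v → w ≠ v → u = w := by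
  have hne : {n : ℕ | ∃ S : Set (ZDV R), IsGlobalDefensiveAlliance (zdGraph R) S ∧
      S.ncard = n}.Nonempty := by
    by_contra hc
    rw [Set.not_nonempty_iff_eq_empty] at hc
    unfold gammaA at h
    rw [hc] at h
    simp at h
  have hm := Nat.sInf_mem hne
  change gammaA (zdGraph R) ∈ _ at hm
  rw [h] at hm
  obtain ⟨S, ⟨⟨_, hS⟩, hD⟩, hc⟩ := hm
  obtain ⟨v, rfl⟩ := Set.ncard_eq_one.1 hc
  have h1 : ∀ u : ZDV R, u ≠ v → (zdGraph R).Adj v u := by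
    intro u hu
    obtain ⟨w, hw, hadj⟩ := hD u (by simpa using hu)
    rw [Set.mem_singleton_iff] at hw
    subst hw
    exact hadj.symm
  refine ⟨v, fun u hu => (h1 u hu).2, fun u w hu hw => ?_⟩
  have h2 := hS v rfl
  have h3 : degIn (zdGraph R) {v} v = 0 := by
    unfold degIn
    rw [Set.ncard_eq_zero (Set.toFinite _)]
    ext x
    simp only [Set.mem_ofPred_eq, Set.mem_singleton_iff, Set.mem_empty_iff_false, iff_false,
      not_and]
    rintro rfl hx
    exact hx.1 rfl
  rw [h3] at h2
  unfold degIn at h2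
  exact (Set.ncard_le_one (Set.toFinite _)).1 h2 u ⟨hu, h1 u hu⟩ w ⟨hw, h1 w hw⟩

theorem aux_Q (R : Type*) [CommRing R] [Finite R] [Nontrivial R]
    (h : gammaA (zdGraph R) = 1) (a b : R) (ha : a ≠ 0) (hb : b ≠ 0) (hab : a ≠ b)
    (h0 : a * b = 0) : zeroDivisorSet R = {0, a, b} := by
  obtain ⟨v, -, h2⟩ := aux_gamma R h
  let A : ZDV R := ⟨a, ha, b, hb, h0⟩
  let B : ZDV R := ⟨b, hb, a, ha, by rw [mul_comm]; exact h0⟩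
  have hAB : A ≠ B := fun e => hab (congrArg Subtype.val e)
  ext x
  constructor
  · intro hx
    by_cases hx0 : x = 0
    · simp [hx0]
    let X : ZDV R := ⟨x, hx0, hx⟩
    have : X = A ∨ X = B := by
      by_cases h3 : X = v
      · by_cases h4 : A = v
        · left; rw [h3, h4]
        · by_cases h5 : B = v
          · right; rw [h3, h5]
          · exact absurd (h2 A B h4 h5) hAB
      · by_cases h4 : A = v
        · by_cases h5 : B = v
          · exact absurd (h4.trans h5.symm) hAB
          · right; exact h2 X B h3 h5
        · left; exact h2 X A h3 h4
    rcases this with e | e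
    · have := congrArg Subtype.val e
      simp only [X, A] at this
      simp [this]
    · have := congrArg Subtype.val e
      simp only [X, B] at this
      simp [this]
  · rintro (rfl | rfl | rfl)
    · exact ⟨1, one_ne_zero, by simp⟩
    · exact A.2.2
    · exact B.2.2

theorem aux_three {R : Type*} [CommRing R] (a b : R) (ha : a ≠ 0) (hb : b ≠ 0) (hab : a ≠ b)
    (hZ : zeroDivisorSet R = {0, a, b}) : (zeroDivisorSet R).ncard = 3 := by
  rw [hZ, Set.ncard_eq_three]
  exact ⟨0, a, b, ha.symm, hb.symm, hab, rfl⟩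

theorem aux_exists (R : Type*) [CommRing R] [Finite R] [Nontrivial R]
    (h : gammaA (zdGraph R) = 1) (h3 : (zeroDivisorSet R).ncard = 3) :
    ∃ a b : R, a ≠ 0 ∧ b ≠ 0 ∧ a ≠ b ∧ a * b = 0 := by
  obtain ⟨v, h1, h2⟩ := aux_gamma R h
  by_cases hu : ∃ u : ZDV R, u ≠ v
  · obtain ⟨u, hu⟩ := hu
    exact ⟨v, u, v.2.1, u.2.1, fun e => hu (Subtype.ext e.symm), h1 u hu⟩
  · push Not at hu
    exfalso
    have : zeroDivisorSet R ⊆ {0, (v : R)} := by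
      intro x hx
      by_cases hx0 : x = 0
      · simp [hx0]
      · right
        exact congrArg Subtype.val (hu ⟨x, hx0, hx⟩)
    have h4 := Set.ncard_le_ncard this (Set.toFinite _)
    have h5 := Set.ncard_insert_le (0 : R) {(v : R)}
    rw [Set.ncard_singleton] at h5
    omega

theorem aux_part_s16 (R : Type*) [CommRing R] [Finite R] [Nontrivial R]
    (h : gammaA (zdGraph R) = 1) (hp : PartitionableGDA (zdGraph R)) :
    ∃ a b : R, a ≠ 0 ∧ b ≠ 0 ∧ a ≠ b ∧ a * b = 0 := by
  obtain ⟨v, h1, h2⟩ := aux_gamma R h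
  suffices hu : ∃ u : ZDV R, u ≠ v by
    obtain ⟨u, hu⟩ := hu
    exact ⟨v, u, v.2.1, u.2.1, fun e => hu (Subtype.ext e.symm), h1 u hu⟩
  by_contra hu
  push Not at hu
  unfold PartitionableGDA at hp
  have : psiG (zdGraph R) ≤ 1 := by
    unfold psiG
    apply csSup_le'
    rintro n ⟨P, ⟨hP, -, hdis⟩, rfl⟩
    rw [Finset.card_le_one]
    intro S hS T hT
    obtain ⟨s, hs⟩ := (hP S hS).1.1
    obtain ⟨t, ht⟩ := (hP T hT).1.1
    by_contra hST
    have := hdis hS hT hST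
    rw [Set.disjoint_left] at this
    apply this hs
    rw [hu s, ← hu t]
    exact ht
  omega

theorem aux_part' (R : Type*) [CommRing R] [Finite R] [Nontrivial R]
    (a b : R) (ha : a ≠ 0) (hb : b ≠ 0) (hab : a ≠ b) (h0 : a * b = 0)
    (hZ : zeroDivisorSet R = {0, a, b}) : PartitionableGDA (zdGraph R) := by
  let A : ZDV R := ⟨a, ha, b, hb, h0⟩
  let B : ZDV R := ⟨b, hb, a, ha, by rw [mul_comm]; exact h0⟩
  have hAB : A ≠ B := fun e => hab (congrArg Subtype.val e)
  have hadj : (zdGraph R).Adj A B := ⟨hAB, h0⟩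
  have hall : ∀ X : ZDV R, X = A ∨ X = B := by
    rintro ⟨x, hx, hx'⟩
    have : x ∈ zeroDivisorSet R := hx'
    rw [hZ] at this
    rcases this with e | e | e
    · exact absurd e hx
    · left; exact Subtype.ext e
    · right; exact Subtype.ext e
  have key : ∀ X Y : ZDV R, (zdGraph R).Adj X Y → (∀ Z, Z = X ∨ Z = Y) →
      IsGlobalDefensiveAlliance (zdGraph R) {X} := by
    intro X Y hXY hZ
    refine ⟨⟨⟨X, rfl⟩, ?_⟩, ?_⟩
    · rintro _ rfl
      refine le_trans ?_ (Nat.le_add_left 1 _)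
      unfold degIn
      rw [Set.ncard_le_one (Set.toFinite _)]
      rintro p ⟨hp, -⟩ q ⟨hq, -⟩
      rcases hZ p with e | e
      · exact absurd e hp
      rcases hZ q with e' | e'
      · exact absurd e' hq
      rw [e, e']
    · intro p hp
      rcases hZ p with e | e
      · exact absurd e hp
      · exact ⟨X, rfl, e ▸ hXY.symm⟩
  have kA := key A B hadj hall
  have kB := key B A hadj.symm (fun Z => (hall Z).symm)
  have hne : ({A} : Set (ZDV R)) ≠ {B} := fun e => hAB (Set.singleton_injective e)
  unfold PartitionableGDA psiG
  apply le_csSup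
  · have : Finite (Set (ZDV R)) := inferInstance
    have : Fintype (Set (ZDV R)) := Fintype.ofFinite _
    refine ⟨Fintype.card (Set (ZDV R)), ?_⟩
    rintro n ⟨P, -, rfl⟩
    exact Finset.card_le_univ P
  · refine ⟨{{A}, {B}}, ⟨?_, ?_, ?_⟩, Finset.card_pair hne⟩
    · intro S hS
      rw [Finset.mem_insert, Finset.mem_singleton] at hS
      rcases hS with rfl | rfl
      · exact kA
      · exact kB
    · rw [Set.eq_univ_iff_forall]
      intro X
      rcases hall X with rfl | rfl
      · exact ⟨{A}, by simp, rfl⟩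
      · exact ⟨{B}, by simp, rfl⟩
    · intro S hS T hT hST
      simp only [Finset.coe_insert, Finset.coe_singleton, Set.mem_insert_iff,
        Set.mem_singleton_iff] at hS hT
      rcases hS with rfl | rfl <;> rcases hT with rfl | rfl
      · exact absurd rfl hST
      · simpa using hAB
      · simpa using hAB.symm
      · exact absurd rfl hST

theorem aux_transport {R S : Type*} [CommRing R] [CommRing S] (e : R ≃+* S)
    (h : ∃ a b : S, a ≠ 0 ∧ b ≠ 0 ∧ a ≠ b ∧ a * b = 0) :
    ∃ a b : R, a ≠ 0 ∧ b ≠ 0 ∧ a ≠ b ∧ a * b = 0 := by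
  obtain ⟨a, b, ha, hb, hab, h0⟩ := h
  refine ⟨e.symm a, e.symm b, by simpa using ha, by simpa using hb, by simpa using hab, ?_⟩
  rw [← map_mul, h0, map_zero]

theorem aux_poly : ∃ a b : (Polynomial (ZMod 3) ⧸
    Ideal.span {(Polynomial.X : Polynomial (ZMod 3)) ^ 2}),
    a ≠ 0 ∧ b ≠ 0 ∧ a ≠ b ∧ a * b = 0 := by
  have key : ∀ c : ZMod 3, c ≠ 0 → Ideal.Quotient.mk
      (Ideal.span {(Polynomial.X : Polynomial (ZMod 3)) ^ 2})
      (Polynomial.C c * Polynomial.X) ≠ 0 := by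
    intro c hc h
    rw [Ideal.Quotient.eq_zero_iff_mem, Ideal.mem_span_singleton,
      Polynomial.X_pow_dvd_iff] at h
    apply hc
    simpa using h 1 (by norm_num)
  refine ⟨Ideal.Quotient.mk _ (Polynomial.C 1 * Polynomial.X),
    Ideal.Quotient.mk _ (Polynomial.C 2 * Polynomial.X), key _ (by decide), key _ (by decide),
    ?_, ?_⟩
  · intro e
    rw [← sub_eq_zero, ← map_sub, ← sub_mul, ← Polynomial.C_sub] at e
    exact key _ (by decide) e
  · rw [← map_mul, Ideal.Quotient.eq_zero_iff_mem, Ideal.mem_span_singleton]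
    exact ⟨Polynomial.C 1 * Polynomial.C 2, by ring⟩

/-- `|R| = |aR| |ann a|`. -/
theorem aux_card {R : Type*} [CommRing R] (a : R) :
    Nat.card R = Nat.card (AddMonoidHom.mulLeft a).range *
      Nat.card (AddMonoidHom.mulLeft a).ker := by
  rw [AddSubgroup.card_eq_card_quotient_mul_card_addSubgroup (AddMonoidHom.mulLeft a).ker]
  congr 1
  exact Nat.card_congr (QuotientAddGroup.quotientKerEquivRange (AddMonoidHom.mulLeft a)).toEquiv

theorem aux_zmod2_s16 {R : Type*} [CommRing R] [Finite R] [Nontrivial R] (a : R) (ha : a ≠ 0)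
    (ha1 : 1 - a ≠ 0) (h2 : (2 : R) = 0) (haa : a * a = a) (hc : Nat.card R = 4) :
    Nonempty (R ≃+* (ZMod 2 × ZMod 2)) := by
  have : CharP R 2 := CharTwo.of_one_ne_zero_of_two_eq_zero one_ne_zero h2
  let c := ZMod.castHom (dvd_refl 2) R
  let f : ZMod 2 × ZMod 2 →+* R :=
    { toFun := fun p => c p.1 * a + c p.2 * (1 - a)
      map_one' := by simp
      map_zero' := by simp
      map_add' := by intro p q; simp; ring
      map_mul' := by
        intro p q
        simp only [Prod.fst_mul, Prod.snd_mul, map_mul]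
        linear_combination (- (c p.1 - c p.2) * (c q.1 - c q.2)) * haa }
  have hz : ∀ x : ZMod 2, x = 0 ∨ x = 1 := by decide
  have hinj : Function.Injective f := by
    rw [injective_iff_map_eq_zero]
    rintro ⟨x, y⟩ hxy
    change c x * a + c y * (1 - a) = 0 at hxy
    rcases hz x with rfl | rfl <;> rcases hz y with rfl | rfl
    · rfl
    · exfalso; simp at hxy; exact ha1 hxy
    · exfalso; simp at hxy; exact ha hxy
    · exfalso; simp at hxy
  have hbij : Function.Bijective f := by
    rw [Nat.bijective_iff_injective_and_card]
    exact ⟨hinj, by rw [hc]; simp⟩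
  exact ⟨(RingEquiv.ofBijective f hbij).symm⟩

theorem aux_zmod9 {R : Type*} [CommRing R] [Finite R] [Nontrivial R]
    (h3 : (3 : R) ≠ 0) (hc : Nat.card R = 9) :
    Nonempty (R ≃+* ZMod 9) := by
  have : Fintype R := Fintype.ofFinite R
  have h9 : ringChar R ∣ 3 ^ 2 := by
    rw [← CharP.cast_eq_zero_iff R (ringChar R)]
    have := card_nsmul_eq_zero' (G := R) (x := 1)
    rw [hc] at this
    simpa using this
  have hch : ringChar R = 9 := by
    obtain ⟨k, hk, e⟩ := (Nat.dvd_prime_pow Nat.prime_three).1 h9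
    interval_cases k
    · exact absurd e (CharP.ringChar_ne_one)
    · exfalso
      apply h3
      have := ringChar.Nat.cast_ringChar (R := R)
      rw [e] at this
      exact_mod_cast this
    · exact e
  have : CharP R 9 := by rw [← hch]; exact ringChar.charP R
  exact ⟨(ZMod.ringEquiv R (by rw [← Nat.card_eq_fintype_card, hc])).symm⟩

theorem aux_poly3 {R : Type*} [CommRing R] [Finite R] [Nontrivial R] (a : R) (ha : a ≠ 0)
    (h3 : (3 : R) = 0) (haa : a * a = 0) (hc : Nat.card R = 9) :
    Nonempty (R ≃+* (Polynomial (ZMod 3) ⧸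
          Ideal.span {(Polynomial.X : Polynomial (ZMod 3)) ^ 2})) := by
  have : Fact (Nat.Prime 3) := ⟨Nat.prime_three⟩
  have : CharP R 3 := by
    have hd : ringChar R ∣ 3 := by
      rw [← CharP.cast_eq_zero_iff R (ringChar R)]
      exact_mod_cast h3
    have hch : ringChar R = 3 := by
      rcases (Nat.dvd_prime Nat.prime_three).1 hd with e | e
      · exact absurd e (CharP.ringChar_ne_one)
      · exact e
    rw [← hch]; exact ringChar.charP R
  let c := ZMod.castHom (dvd_refl 3) R
  have hz : ∀ x y : ZMod 3, c x + c y * a = 0 → x = 0 ∧ y = 0 := by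
    have hu : ∀ x : ZMod 3, c x * a = 0 → x = 0 := by
      intro x hx
      by_contra hne
      have : c x⁻¹ * (c x * a) = a := by
        rw [← mul_assoc, ← map_mul, inv_mul_cancel₀ hne, map_one, one_mul]
      rw [hx, mul_zero] at this
      exact ha this.symm
    intro x y h
    have hx : x = 0 := by
      apply hu
      linear_combination a * h - c y * haa
    subst hx
    refine ⟨rfl, hu y ?_⟩
    simpa using h
  have hbij : Function.Bijective (fun p : ZMod 3 × ZMod 3 => c p.1 + c p.2 * a) := by
    rw [Nat.bijective_iff_injective_and_card]
    refine ⟨?_, by rw [hc]; simp⟩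
    rintro ⟨x, y⟩ ⟨x', y'⟩ h
    simp only at h
    have := hz (x - x') (y - y') (by rw [map_sub, map_sub]; linear_combination h)
    rw [sub_eq_zero, sub_eq_zero] at this
    rw [this.1, this.2]
  let f : Polynomial (ZMod 3) →+* R := Polynomial.eval₂RingHom c a
  let g := Ideal.Quotient.lift (Ideal.span {(Polynomial.X : Polynomial (ZMod 3)) ^ 2}) f (by
    intro p hp
    rw [Ideal.mem_span_singleton] at hp
    obtain ⟨q, rfl⟩ := hp
    simp [f, pow_two, haa])
  have hg : Function.Bijective g := by
    constructor
    · rw [injective_iff_map_eq_zero]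
      intro p hp
      obtain ⟨p, rfl⟩ := Ideal.Quotient.mk_surjective p
      have hp' : f p = 0 := hp
      have e : p = (p.divX.divX * Polynomial.X + Polynomial.C (p.divX.coeff 0)) * Polynomial.X +
          Polynomial.C (p.coeff 0) := by
        rw [Polynomial.divX_mul_X_add, Polynomial.divX_mul_X_add]
      have h1 : f p = c (p.coeff 0) + c (p.divX.coeff 0) * a := by
        conv_lhs => rw [e]
        simp only [f, Polynomial.coe_eval₂RingHom, Polynomial.eval₂_add, Polynomial.eval₂_mul_X,
          Polynomial.eval₂_C]
        linear_combination (Polynomial.eval₂ c a p.divX.divX) * haa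
      rw [h1] at hp'
      obtain ⟨e1, e2⟩ := hz _ _ hp'
      rw [Ideal.Quotient.eq_zero_iff_mem, Ideal.mem_span_singleton, e, e1, e2]
      exact ⟨p.divX.divX, by simp; ring⟩
    · intro r
      obtain ⟨⟨x, y⟩, h⟩ := hbij.2 r
      refine ⟨Ideal.Quotient.mk _ (Polynomial.C x + Polynomial.C y * Polynomial.X), ?_⟩
      rw [← h]
      change f _ = _
      simp [f]
  exact ⟨(RingEquiv.ofBijective g hg).symm⟩

theorem aux_class (R : Type*) [CommRing R] [Finite R] [Nontrivial R]
    (a b : R) (ha : a ≠ 0) (hb : b ≠ 0) (hab : a ≠ b) (h0 : a * b = 0)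
    (hZ : zeroDivisorSet R = {0, a, b}) :
    (Nonempty (R ≃+* (ZMod 2 × ZMod 2)) ∨ Nonempty (R ≃+* ZMod 9) ∨
        Nonempty (R ≃+* (Polynomial (ZMod 3) ⧸
          Ideal.span {(Polynomial.X : Polynomial (ZMod 3)) ^ 2}))) := by
  have hmem : ∀ x y : R, y ≠ 0 → x * y = 0 → x = 0 ∨ x = a ∨ x = b := by
    intro x y hy hxy
    have : x ∈ zeroDivisorSet R := ⟨y, hy, hxy⟩
    rwa [hZ] at this
  have hcard := aux_card a
  have hran : ∀ r : R, a * r = 0 ∨ a * r = a ∨ a * r = b := fun r =>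
    hmem (a * r) b hb (by linear_combination r * h0)
  have hmr : ∀ x, x ∈ (AddMonoidHom.mulLeft a).range ↔ ∃ r, a * r = x := fun x => Iff.rfl
  have hmk : ∀ x, x ∈ (AddMonoidHom.mulLeft a).ker ↔ a * x = 0 := fun x => Iff.rfl
  have n3 : ({0, a, b} : Set R).ncard = 3 :=
    Set.ncard_eq_three.2 ⟨0, a, b, ha.symm, hb.symm, hab, rfl⟩
  by_cases haa : a * a = 0
  · right
    have hk : ((AddMonoidHom.mulLeft a).ker : Set R) = {0, a, b} := by
      ext x
      constructor
      · intro hx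
        exact hmem x a ha (by rw [mul_comm]; exact hx)
      · rintro (rfl | rfl | rfl)
        · exact mul_zero a
        · exact haa
        · exact h0
    have hkc : Nat.card (AddMonoidHom.mulLeft a).ker = 3 := by
      rw [← n3, ← hk]; rfl
    have hle : (AddMonoidHom.mulLeft a).range ≤ (AddMonoidHom.mulLeft a).ker := by
      rintro x ⟨r, rfl⟩
      rw [hmk]
      change a * (a * r) = 0
      linear_combination r * haa
    have hd := AddSubgroup.card_dvd_of_le hle
    rw [hkc, Nat.dvd_prime Nat.prime_three] at hd
    have hrc : Nat.card (AddMonoidHom.mulLeft a).range = 3 := by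
      rcases hd with e | e
      · exfalso
        rw [AddSubgroup.card_eq_one] at e
        have : a ∈ (AddMonoidHom.mulLeft a).range := ⟨1, mul_one a⟩
        rw [e] at this
        exact ha this
      · exact e
    rw [hrc, hkc] at hcard
    by_cases h3 : (3 : R) = 0
    · right
      exact aux_poly3 a ha h3 haa hcard
    · left
      exact aux_zmod9 h3 hcard
  · left
    have hk : ((AddMonoidHom.mulLeft a).ker : Set R) = {0, b} := by
      ext x
      constructor
      · intro hx
        have hx' : a * x = 0 := hx
        rcases hmem x a ha (by rw [mul_comm]; exact hx) with e | e | e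
        · simp [e]
        · rw [e] at hx'; exact absurd hx' haa
        · simp [e]
      · rintro (rfl | rfl)
        · exact mul_zero a
        · exact h0
    have hk' : ∀ x, a * x = 0 → x = 0 ∨ x = b := by
      intro x hx
      have : x ∈ ((AddMonoidHom.mulLeft a).ker : Set R) := hx
      rwa [hk] at this
    have hkc : Nat.card (AddMonoidHom.mulLeft a).ker = 2 := by
      rw [← Set.ncard_pair hb.symm, ← hk]; rfl
    have h2b : 2 * b = 0 := by
      rcases hk' (2 * b) (by linear_combination 2 * h0) with e | e
      · exact e
      · exfalso; apply hb; linear_combination e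
    have hnb : ∀ r, a * r ≠ b := by
      intro r hr
      have hR : ((AddMonoidHom.mulLeft a).range : Set R) = {0, a, b} := by
        ext x
        constructor
        · rintro ⟨r, rfl⟩
          exact hran r
        · rintro (rfl | rfl | rfl)
          · exact ⟨0, mul_zero a⟩
          · exact ⟨1, mul_one _⟩
          · exact ⟨r, hr⟩
      have hrc : Nat.card (AddMonoidHom.mulLeft a).range = 3 := by
        rw [← n3, ← hR]; rfl
      have := card_nsmul_eq_zero' (G := (AddMonoidHom.mulLeft a).range) (x := ⟨b, r, hr⟩)
      rw [hrc] at this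
      have := congrArg Subtype.val this
      simp at this
      apply hb
      linear_combination this - h2b
    have hR : ((AddMonoidHom.mulLeft a).range : Set R) = {0, a} := by
      ext x
      constructor
      · rintro ⟨r, rfl⟩
        rcases hran r with e | e | e
        · left; exact e
        · right; exact e
        · exact absurd e (hnb r)
      · rintro (rfl | rfl)
        · exact ⟨0, mul_zero a⟩
        · exact ⟨1, mul_one _⟩
    have hrc : Nat.card (AddMonoidHom.mulLeft a).range = 2 := by
      rw [← Set.ncard_pair ha.symm, ← hR]; rfl
    rw [hrc, hkc] at hcard
    have hid : a * a = a := by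
      rcases hran a with e | e | e
      · exact absurd e haa
      · exact e
      · exact absurd e (hnb a)
    have h1a : 1 - a ≠ 0 := by
      intro e
      apply hb
      linear_combination h0 + b * e
    have hb1 : 1 - a = b := by
      rcases hk' (1 - a) (by linear_combination -hid) with e | e
      · exact absurd e h1a
      · exact e
    have h2a : 2 * a = 0 := by
      rcases hran 2 with e | e | e
      · linear_combination e
      · exfalso; apply ha; linear_combination e
      · exact absurd e (hnb 2)
    exact aux_zmod2_s16 a ha h1a (by linear_combination h2a + h2b + 2 * hb1) hid hcard

/-- For a finite commutative ring `R` with `γ_a(Γ(R)) = 1`, the following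
are equivalent: `Γ(R)` is partitionable into global defensive alliances; `|Z(R)| = 3`;
`R` is isomorphic to `ℤ₂ × ℤ₂`, `ℤ₉`, or `ℤ₃[X]/(X²)`. -/
theorem stmt16 (R : Type*) [CommRing R] [Finite R] [Nontrivial R]
    (h : gammaA (zdGraph R) = 1) :
    (PartitionableGDA (zdGraph R) ↔ (zeroDivisorSet R).ncard = 3) ∧
    ((zeroDivisorSet R).ncard = 3 ↔
      (Nonempty (R ≃+* (ZMod 2 × ZMod 2)) ∨ Nonempty (R ≃+* ZMod 9) ∨
        Nonempty (R ≃+* (Polynomial (ZMod 3) ⧸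
          Ideal.span {(Polynomial.X : Polynomial (ZMod 3)) ^ 2})))) := by
  refine ⟨⟨fun hp => ?_, fun h3 => ?_⟩, fun h3 => ?_, fun h3 => ?_⟩
  · obtain ⟨a, b, ha, hb, hab, h0⟩ := aux_part_s16 R h hp
    exact aux_three a b ha hb hab (aux_Q R h a b ha hb hab h0)
  · obtain ⟨a, b, ha, hb, hab, h0⟩ := aux_exists R h h3
    exact aux_part' R a b ha hb hab h0 (aux_Q R h a b ha hb hab h0)
  · obtain ⟨a, b, ha, hb, hab, h0⟩ := aux_exists R h h3
    exact aux_class R a b ha hb hab h0 (aux_Q R h a b ha hb hab h0)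
  · have : ∃ a b : R, a ≠ 0 ∧ b ≠ 0 ∧ a ≠ b ∧ a * b = 0 := by
      rcases h3 with ⟨⟨e⟩⟩ | ⟨⟨e⟩⟩ | ⟨⟨e⟩⟩
      · exact aux_transport e ⟨(1, 0), (0, 1), by decide, by decide, by decide, by decide⟩
      · exact aux_transport e ⟨3, 6, by decide, by decide, by decide, by decide⟩
      · exact aux_transport e aux_poly
    obtain ⟨a, b, ha, hb, hab, h0⟩ := this
    exact aux_three a b ha hb hab (aux_Q R h a b ha hb hab h0)
end

section
/- Let R be a finite commutative ring such that Γ(R) is partitionable into global defensive alliances. If γ_a(Γ(R)) = 1, then ψ_g(Γ(R)) = 2. -/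
open Classical

/-- For a finite commutative ring `R` such that `Γ(R)` is partitionable
into global defensive alliances, if `γ_a(Γ(R)) = 1` then `ψ_g(Γ(R)) = 2`. -/
theorem stmt17 (R : Type*) [CommRing R] [Finite R] [Nontrivial R]
    (hpart : PartitionableGDA (zdGraph R)) (h : gammaA (zdGraph R) = 1) :
    psiG (zdGraph R) = 2 := by
  apply le_antisymm _ hpart
  have hmem : (1 : ℕ) ∈ {n : ℕ | ∃ S : Set (ZDV R),
      IsGlobalDefensiveAlliance (zdGraph R) S ∧ S.ncard = n} := by
    have h0 := Nat.sInf_mem (s := {n : ℕ | ∃ S : Set (ZDV R),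
      IsGlobalDefensiveAlliance (zdGraph R) S ∧ S.ncard = n}) (by
        apply Nat.nonempty_of_pos_sInf
        change 0 < gammaA (zdGraph R)
        omega)
    change gammaA (zdGraph R) ∈ _ at h0
    rwa [h] at h0
  obtain ⟨S, ⟨⟨-, hd⟩, hdom⟩, hS⟩ := hmem
  obtain ⟨v, rfl⟩ := Set.ncard_eq_one.mp hS
  have hv := hd v rfl
  have h0 : degIn (zdGraph R) {v} v = 0 := by
    unfold degIn
    rw [Set.ncard_eq_zero (Set.toFinite _)]
    ext u
    simp only [Set.mem_setOf_eq, Set.mem_singleton_iff, Set.mem_empty_iff_false, iff_false]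
    rintro ⟨rfl, hu⟩
    exact (zdGraph R).loopless.irrefl _ hu
  have hcard : Nat.card (ZDV R) ≤ 2 := by
    rw [← Set.ncard_univ]
    have hsub : (Set.univ : Set (ZDV R)) ⊆
        insert v {u | u ∈ ({v} : Set (ZDV R))ᶜ ∧ (zdGraph R).Adj v u} := by
      intro u _
      by_cases huv : u = v
      · exact Or.inl huv
      · right
        obtain ⟨w, hw, hadj⟩ := hdom u huv
        rw [Set.mem_singleton_iff] at hw
        subst hw
        exact ⟨huv, hadj.symm⟩
    have h1 := Set.ncard_le_ncard hsub (Set.toFinite _)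
    have h2 := Set.ncard_insert_le v
      {u | u ∈ ({v} : Set (ZDV R))ᶜ ∧ (zdGraph R).Adj v u}
    unfold degIn at hv h0
    omega
  apply csSup_le'
  rintro n ⟨P, ⟨hP, -, hdisj⟩, rfl⟩
  refine le_trans ?_ hcard
  have hne : ∀ T : P, ∃ x, x ∈ T.1 := fun T => (hP T.1 T.2).1.1
  choose f hf using hne
  have hinj : Function.Injective f := by
    intro A B hAB
    by_contra hne
    have := hdisj A.2 B.2 (fun h => hne (Subtype.ext h))
    exact Set.disjoint_left.mp this (hf A) (hAB ▸ hf B)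
  have := Nat.card_le_card_of_injective f hinj
  simpa using this
end
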